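/- arXiv:2305.07621 — 4 statements merged into one kernel-verified Lean document; each statement's English description precedes it below -/
import Mathlib

section
/- Let K be a continuum in a metric space X with finite Hausdorff 1-measure H^1(K) < ∞. Then there exists a continuous surjective curve γ : [0,1] → K with length ℓ(γ) ≤ 2·H^1(K) − diam(K). -/
open MeasureTheory

/-!
Shortest `ε`-chains have at most `O(H¹(K) / ε)` vertices, because balls around every second vertex
are disjoint and each carries measure at least `ε / 2`. Letting `ε → 0`, any two points of `K` are
joined by a Lipschitz path. A curve of speed one that reaches a closed set `S` from a point in the
shortest possible time `h` is injective and meets `S` only at its end, and reparametrizing it by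
the measure of its initial pieces shows that it has measure at least `h` outside `S`.

Start with such an arc between two points at distance `diam K`. As long as the image `S` of the
current curve misses a ball of radius `ε`, insert the excursion that follows a shortest arc from
`S` to the centre of the ball and back: the length grows by `2 * h`, the measure of the image by at
least `h ≥ ε`, so `length + diam K ≤ 2 * H¹(image)` is preserved and the process stops. This gives
`ε`-dense curves of length at most `2 * H¹(K) - diam K`, and a limit of them as `ε → 0` is
surjective.
-/

open Filter Metric Set Topology
open scoped ENNReal NNReal

section LowerBounds

variable {X : Type*} [MetricSpace X] [MeasurableSpace X] [BorelSpace X]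

theorem ofReal_le_hausdorffMeasure_inter_ball {K : Set X} (hK : IsPreconnected K) {x z : X}
    (hx : x ∈ K) (hz : z ∈ K) {r : ℝ} (hr : r ≤ dist z x) :
    ENNReal.ofReal r ≤ μH[1] (K ∩ ball x r) := by
  have hdist : LipschitzWith 1 (fun y ↦ dist y x) := LipschitzWith.dist_left x
  have hsub : Ico 0 r ⊆ (fun y ↦ dist y x) '' (K ∩ ball x r) := by
    intro u hu
    have hu' : u ∈ Icc (dist x x) (dist z x) := by
      rw [dist_self]
      exact ⟨hu.1, hu.2.le.trans hr⟩
    obtain ⟨y, hy, rfl⟩ := hK.intermediate_value hx hz hdist.continuous.continuousOn hu'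
    exact ⟨y, ⟨hy, hu.2⟩, rfl⟩
  calc
    ENNReal.ofReal r = μH[1] (Ico 0 r) := by simp [hausdorffMeasure_real]
    _ ≤ μH[1] ((fun y ↦ dist y x) '' (K ∩ ball x r)) := measure_mono hsub
    _ ≤ μH[1] (K ∩ ball x r) := by
      simpa using hdist.hausdorffMeasure_image_le zero_le_one (K ∩ ball x r)

theorem ofReal_dist_le_hausdorffMeasure {K : Set X} (hK : IsPreconnected K) {x z : X}
    (hx : x ∈ K) (hz : z ∈ K) : ENNReal.ofReal (dist x z) ≤ μH[1] K :=
  (ofReal_le_hausdorffMeasure_inter_ball hK hz hx le_rfl).trans (measure_mono inter_subset_left)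

theorem le_measureReal_ball_of_two_mul_le_dist [PreconnectedSpace X]
    [IsFiniteMeasure (μH[1] : Measure X)] {x y : X} {r : ℝ} (hr : 2 * r ≤ dist x y) (z : X) :
    r ≤ μH[1].real (ball z r) := by
  obtain ⟨w, hw⟩ : ∃ w, r ≤ dist w z := by
    by_contra! hlt
    linarith [dist_triangle_right x y z, hlt x, hlt y]
  have hball := ofReal_le_hausdorffMeasure_inter_ball isPreconnected_univ (mem_univ z)
    (mem_univ w) hw
  rw [univ_inter] at hball
  exact (ENNReal.ofReal_le_iff_le_toReal (measure_ne_top _ _)).1 hball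

end LowerBounds

section ProximityGraph

theorem natFloor_sub_natFloor_le {R : Type*} [CommRing R] [LinearOrder R] [IsStrictOrderedRing R]
    [FloorSemiring R] {s t : R} (hst : s ≤ t) : (⌊t⌋₊ : R) - ⌊s⌋₊ ≤ t - s + 1 := by
  obtain ht | ht := le_total 0 t
  · linarith [Nat.floor_le ht, Nat.sub_one_lt_floor s]
  · rw [Nat.floor_of_nonpos ht, Nat.floor_of_nonpos (hst.trans ht), sub_self]
    linarith

/-- The graph on a metric space in which distinct points at distance less than `ε` are adjacent,
so that its walks are the `ε`-chains without repeated consecutive points. -/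
def proximityGraph (X : Type*) [PseudoMetricSpace X] (ε : ℝ) : SimpleGraph X where
  Adj x y := x ≠ y ∧ dist x y < ε
  symm := ⟨fun x y h ↦ ⟨h.1.symm, dist_comm x y ▸ h.2⟩⟩
  loopless := ⟨fun _ h ↦ h.1 rfl⟩

variable {X : Type*} [PseudoMetricSpace X] {ε : ℝ}

namespace proximityGraph

theorem preconnected [PreconnectedSpace X] (hε : 0 < ε) :
    (proximityGraph X ε).Preconnected := by
  refine PreconnectedSpace.induction₂' _ (fun x ↦ ?_) ⟨fun _ _ _ ↦ SimpleGraph.Reachable.trans⟩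
  filter_upwards [ball_mem_nhds x hε] with y hy
  have hxy : (proximityGraph X ε).Reachable y x := by
    obtain rfl | hne := eq_or_ne y x
    · rfl
    · exact SimpleGraph.Adj.reachable ⟨hne, hy⟩
  exact ⟨hxy.symm, hxy⟩

theorem dist_getVert_le {x y : X} (hε : 0 ≤ ε) (p : (proximityGraph X ε).Walk x y) {i j : ℕ}
    (hij : i ≤ j) : dist (p.getVert i) (p.getVert j) ≤ (j - i) * ε := by
  have hstep (k : ℕ) : dist (p.getVert k) (p.getVert (k + 1)) ≤ ε := by
    obtain hk | hk := lt_or_ge k p.length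
    · exact (p.adj_getVert_succ hk).2.le
    · simpa [p.getVert_of_length_le hk, p.getVert_of_length_le (hk.trans k.le_succ)]
  simpa [Nat.cast_sub hij] using
    dist_le_Ico_sum_of_dist_le (f := p.getVert) hij (d := fun _ ↦ ε) fun _ _ ↦ hstep _

theorem le_dist_getVert_of_length_eq_dist {x y : X} {p : (proximityGraph X ε).Walk x y}
    (hp : p.length = (proximityGraph X ε).dist x y) {i j : ℕ} (hij : i + 2 ≤ j)
    (hj : j ≤ p.length) : ε ≤ dist (p.getVert i) (p.getVert j) := by
  let q := (p.drop i).take (j - i)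
  have hend : (p.drop i).getVert (j - i) = p.getVert j := by
    rw [p.drop_getVert, Nat.add_sub_cancel' (by lia)]
  have hlen : q.length = j - i := by
    simp only [q, SimpleGraph.Walk.take_length, SimpleGraph.Walk.drop_length]
    lia
  have hq : q.length = (proximityGraph X ε).dist (p.getVert i) (p.getVert j) := by
    rw [← hend]
    exact SimpleGraph.length_eq_dist_of_subwalk hp
      (((p.drop i).isSubwalk_take _).trans (p.isSubwalk_drop i))
  by_contra! hlt
  have hdist : (proximityGraph X ε).dist (p.getVert i) (p.getVert j) ≤ 1 := by
    obtain heq | hne := eq_or_ne (p.getVert i) (p.getVert j)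
    · simp [heq]
    · have hadj : (proximityGraph X ε).Adj (p.getVert i) (p.getVert j) := ⟨hne, hlt⟩
      exact (SimpleGraph.dist_eq_one_iff_adj.2 hadj).le
  lia

theorem dist_getVert_floor_le {x y : X} (hε : 0 < ε) (p : (proximityGraph X ε).Walk x y)
    (s t : ℝ) : dist (p.getVert ⌊s / ε⌋₊) (p.getVert ⌊t / ε⌋₊) ≤ dist s t + ε := by
  wlog hst : s ≤ t generalizing s t
  · rw [dist_comm, dist_comm s]
    exact this t s (le_of_not_ge hst)
  have hdiv : s / ε ≤ t / ε := by gcongr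
  calc
    dist (p.getVert ⌊s / ε⌋₊) (p.getVert ⌊t / ε⌋₊) ≤ (⌊t / ε⌋₊ - ⌊s / ε⌋₊) * ε :=
      dist_getVert_le hε.le p (Nat.floor_le_floor hdiv)
    _ ≤ (t / ε - s / ε + 1) * ε := by gcongr; exact natFloor_sub_natFloor_le hdiv
    _ = dist s t + ε := by
      rw [dist_comm, Real.dist_eq, abs_of_nonneg (sub_nonneg.2 hst)]
      field_simp

end proximityGraph

end ProximityGraph

-- With a function space `ℝ → X`, compact by Tychonoff, for `β`, this produces limits of curves.
theorem exists_mem_fst_eq_of_isClosed {α β : Type*} [TopologicalSpace α] [TopologicalSpace β]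
    [CompactSpace β] {F : Set (α × β)} (hF : IsClosed F) {a : α} {l : Filter α} [l.NeBot]
    (hl : l ≤ 𝓝 a) (h : ∀ᶠ a' in l, ∃ b, (a', b) ∈ F) : ∃ b, (a, b) ∈ F := by
  have ha : a ∈ Prod.fst '' F := by
    refine (isClosedMap_fst_of_compactSpace F hF).mem_of_tendsto (f := id) hl ?_
    simpa using h
  simpa using ha

section LipschitzPaths

variable {X : Type*} [MetricSpace X] [MeasurableSpace X] [BorelSpace X] [PreconnectedSpace X]
  [IsFiniteMeasure (μH[1] : Measure X)]

theorem length_mul_le_of_length_eq_dist {x y : X} {ε : ℝ} (hε : 0 < ε)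
    {p : (proximityGraph X ε).Walk x y} (hp : p.length = (proximityGraph X ε).dist x y) :
    p.length * ε ≤ 4 * μH[1].real (univ : Set X) + ε := by
  obtain hshort | hlong := Nat.lt_or_ge p.length 2
  · have hle : (p.length : ℝ) ≤ 1 := mod_cast Nat.le_of_lt_succ hshort
    nlinarith [measureReal_nonneg (μ := μH[1]) (s := (univ : Set X))]
  have hxy : 2 * (ε / 2) ≤ dist x y := by
    simpa [mul_div_cancel₀] using proximityGraph.le_dist_getVert_of_length_eq_dist hp hlong le_rfl
  -- Vertices of a shortest walk at least two steps apart are at distance at least `ε`.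
  have hdisj : ((Finset.range (p.length / 2 + 1) : Finset ℕ) : Set ℕ).PairwiseDisjoint
      (fun k ↦ ball (p.getVert (2 * k)) (ε / 2)) := by
    intro a ha b hb hab
    rw [Finset.coe_range, mem_Iio] at ha hb
    apply ball_disjoint_ball
    rw [add_halves]
    obtain h | h := lt_or_gt_of_ne hab
    · exact proximityGraph.le_dist_getVert_of_length_eq_dist hp (by lia) (by lia)
    · rw [dist_comm]
      exact proximityGraph.le_dist_getVert_of_length_eq_dist hp (by lia) (by lia)
  have hpack : ((p.length / 2 + 1 : ℕ) : ℝ) * (ε / 2) ≤ μH[1].real (univ : Set X) := by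
    calc
      ((p.length / 2 + 1 : ℕ) : ℝ) * (ε / 2)
          = ∑ _k ∈ Finset.range (p.length / 2 + 1), ε / 2 := by simp
      _ ≤ ∑ k ∈ Finset.range (p.length / 2 + 1), μH[1].real (ball (p.getVert (2 * k)) (ε / 2)) :=
        Finset.sum_le_sum fun _ _ ↦ le_measureReal_ball_of_two_mul_le_dist hxy _
      _ = μH[1].real (⋃ k ∈ Finset.range (p.length / 2 + 1), ball (p.getVert (2 * k)) (ε / 2)) :=
        (measureReal_biUnion_finset hdisj fun _ _ ↦ isOpen_ball.measurableSet).symm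
      _ ≤ μH[1].real (univ : Set X) := measureReal_mono (subset_univ _)
  have hhalf : (p.length : ℝ) ≤ 2 * (p.length / 2 + 1 : ℕ) := mod_cast by lia
  nlinarith

theorem exists_coarse_path (x y : X) {ε T : ℝ} (hε : 0 < ε)
    (hT : 4 * μH[1].real (univ : Set X) + ε ≤ T) :
    ∃ f : ℝ → X, f 0 = x ∧ f T = y ∧ ∀ s t, dist (f s) (f t) ≤ dist s t + ε := by
  obtain ⟨p, hp⟩ := (proximityGraph.preconnected hε x y).exists_walk_length_eq_dist
  refine ⟨fun t ↦ p.getVert ⌊t / ε⌋₊, by simp, p.getVert_of_length_le ?_,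
    proximityGraph.dist_getVert_floor_le hε p⟩
  exact Nat.le_floor ((le_div_iff₀ hε).2 ((length_mul_le_of_length_eq_dist hε hp).trans hT))

theorem exists_lipschitzWith_one_path [CompactSpace X] (x y : X) :
    ∃ T, 0 ≤ T ∧ ∃ f : ℝ → X, LipschitzWith 1 f ∧ f 0 = x ∧ f T = y := by
  let T := 4 * μH[1].real (univ : Set X) + 1
  let F : Set (ℝ × (ℝ → X)) :=
    {q | q.2 0 = x ∧ q.2 T = y ∧ ∀ s t, dist (q.2 s) (q.2 t) ≤ dist s t + q.1}
  have hF : IsClosed F := by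
    simp only [F, ofPred_and, ofPred_forall]
    exact (isClosed_eq (by fun_prop) (by fun_prop)).inter
      ((isClosed_eq (by fun_prop) (by fun_prop)).inter <| isClosed_iInter fun s ↦
        isClosed_iInter fun t ↦ isClosed_le (by fun_prop) (by fun_prop))
  have hcoarse : ∀ᶠ ε in 𝓝[>] (0 : ℝ), ∃ f, (ε, f) ∈ F := by
    filter_upwards [Ioo_mem_nhdsGT zero_lt_one] with ε hε
    exact exists_coarse_path x y hε.1 (by simp only [T]; linarith [hε.2])
  obtain ⟨f, hf₀, hfT, hf⟩ := exists_mem_fst_eq_of_isClosed hF nhdsWithin_le_nhds hcoarse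
  exact ⟨T, by positivity, f, LipschitzWith.of_dist_le_mul (by simpa using hf), hf₀, hfT⟩

end LipschitzPaths

section Glue

variable {α : Type*} {c t : ℝ} {f g : ℝ → α}

/-- The concatenation of two curves at time `c`: it follows `f` up to time `c` and `g` afterwards.
It is meant for curves with `f c = g c`. -/
noncomputable def glue (c : ℝ) (f g : ℝ → α) (t : ℝ) : α := if t ≤ c then f t else g t

theorem glue_of_le (ht : t ≤ c) : glue c f g t = f t := if_pos ht

theorem glue_of_ge (hfg : f c = g c) (ht : c ≤ t) : glue c f g t = g t := by
  obtain rfl | hlt := ht.eq_or_lt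
  · rw [glue_of_le le_rfl, hfg]
  · exact if_neg hlt.not_ge

theorem lipschitzWith_glue [PseudoMetricSpace α] {K : ℝ≥0} (hf : LipschitzWith K f)
    (hg : LipschitzWith K g) (hfg : f c = g c) : LipschitzWith K (glue c f g) := by
  refine LipschitzWith.of_dist_le_mul fun s t ↦ ?_
  wlog hst : s ≤ t generalizing s t
  · rw [dist_comm, dist_comm s]
    exact this t s (le_of_not_ge hst)
  obtain htc | hct := le_total t c
  · rw [glue_of_le (hst.trans htc), glue_of_le htc]
    exact hf.dist_le_mul s t
  obtain hcs | hsc := le_total c s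
  · rw [glue_of_ge hfg hcs, glue_of_ge hfg hct]
    exact hg.dist_le_mul s t
  rw [glue_of_le hsc, glue_of_ge hfg hct]
  calc
    dist (f s) (g t) ≤ dist (f s) (f c) + dist (g c) (g t) := hfg ▸ dist_triangle _ _ _
    _ ≤ K * dist s c + K * dist c t := add_le_add (hf.dist_le_mul s c) (hg.dist_le_mul c t)
    _ = K * dist s t := by
      rw [← mul_add, dist_add_dist_of_mem_segment]
      rw [segment_eq_Icc hst]
      exact ⟨hsc, hct⟩

-- The excursion runs along `b` backwards from `b h` to `b 0`, then forwards to `b h` again.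
theorem exists_lipschitzWith_excursion [PseudoMetricSpace α] {K : ℝ≥0} {b : ℝ → α} {a h : ℝ}
    (hf : LipschitzWith K f) (hb : LipschitzWith K b) (hh : 0 ≤ h) (hc : c ∈ Icc 0 a)
    (hbf : b h = f c) :
    ∃ g, LipschitzWith K g ∧ f '' Icc 0 a ∪ b '' Icc 0 h ⊆ g '' Icc 0 (a + 2 * h) := by
  let excursion (u : ℝ) : α := b |u - (c + h)|
  let rest (u : ℝ) : α := f (u - 2 * h)
  have hexcursion : LipschitzWith K excursion := LipschitzWith.of_dist_le_mul fun s t ↦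
    (hb.dist_le_mul _ _).trans <| by
      gcongr
      simpa [Real.dist_eq] using abs_abs_sub_abs_le (s - (c + h)) (t - (c + h))
  have hrest : LipschitzWith K rest := LipschitzWith.of_dist_le_mul fun s t ↦ by
    simpa [Real.dist_eq] using hf.dist_le_mul (s - 2 * h) (t - 2 * h)
  have hend : excursion (c + 2 * h) = rest (c + 2 * h) := by
    simp only [excursion, rest, add_sub_cancel_right, ← hbf]
    congr
    rw [abs_of_nonneg] <;> linarith
  have hstart : f c = glue (c + 2 * h) excursion rest c := by
    rw [glue_of_le (by linarith), ← hbf]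
    simp [excursion, abs_of_nonneg hh]
  refine ⟨glue c f (glue (c + 2 * h) excursion rest),
    lipschitzWith_glue hf (lipschitzWith_glue hexcursion hrest hend) hstart, ?_⟩
  rintro _ (⟨t, ht, rfl⟩ | ⟨t, ht, rfl⟩)
  · obtain htc | hct := le_total t c
    · exact ⟨t, ⟨ht.1, by linarith [ht.2]⟩, glue_of_le htc⟩
    · refine ⟨t + 2 * h, ⟨by linarith [ht.1], by linarith [ht.2]⟩, ?_⟩
      rw [glue_of_ge hstart (by linarith), glue_of_ge hend (by linarith)]
      simp [rest]
  · refine ⟨c + h + t, ⟨by linarith [hc.1, ht.1], by linarith [hc.2, ht.2]⟩, ?_⟩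
    rw [glue_of_ge hstart (by linarith [ht.1]), glue_of_le (by linarith [ht.2])]
    simp [excursion, abs_of_nonneg ht.1]

end Glue

section TravelTimes

theorem continuousOn_eval_lipschitzWith {α β : Type*} [PseudoEMetricSpace α]
    [PseudoEMetricSpace β] (K : ℝ≥0) :
    ContinuousOn (fun p : α × (α → β) ↦ p.2 p.1) {p | LipschitzWith K p.2} := by
  have h := continuousOn_prod_of_continuousOn_lipschitzOnWith
    (fun p : α × (α → β) ↦ p.2 p.1) (s := univ) (t := {f | LipschitzWith K f}) K
    (fun a _ ↦ (continuous_apply a).continuousOn) (fun _ hf ↦ hf.lipschitzOnWith)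
  rwa [univ_prod] at h

variable {X : Type*} [PseudoMetricSpace X] {x : X} {S : Set X} {h : ℝ} {f : ℝ → X}

/-- The times needed by curves of speed at most one to get from the point `x` to the set `S`. -/
def travelTimes (x : X) (S : Set X) : Set ℝ :=
  {h | 0 ≤ h ∧ ∃ f : ℝ → X, LipschitzWith 1 f ∧ f 0 = x ∧ f h ∈ S}

theorem injOn_of_isLeast_travelTimes (hh : IsLeast (travelTimes x S) h) (hf : LipschitzWith 1 f)
    (hf₀ : f 0 = x) (hfh : f h ∈ S) : InjOn f (Icc 0 h) := by
  intro s hs t ht hst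
  by_contra hne
  wlog hlt : s < t generalizing s t
  · exact this ht hs hst.symm (Ne.symm hne) (lt_of_le_of_ne (le_of_not_gt hlt) (Ne.symm hne))
  -- Skipping the loop between the times `s` and `t` would lead to `S` earlier.
  have hshift : LipschitzWith 1 (fun u ↦ f (u + (t - s))) := LipschitzWith.of_dist_le_mul
    fun u v ↦ by simpa using hf.dist_le_mul (u + (t - s)) (v + (t - s))
  have hjoin : f s = f (s + (t - s)) := by rwa [add_sub_cancel]
  have hshort : h - (t - s) ∈ travelTimes x S := by
    refine ⟨by linarith [hs.1, ht.2], glue s f fun u ↦ f (u + (t - s)),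
      lipschitzWith_glue hf hshift hjoin, ?_, ?_⟩
    · rw [glue_of_le hs.1, hf₀]
    · rw [glue_of_ge hjoin (by linarith [ht.2])]
      simpa using hfh
  linarith [hh.2 hshort]

theorem notMem_of_isLeast_travelTimes (hh : IsLeast (travelTimes x S) h)
    (hf : LipschitzWith 1 f) (hf₀ : f 0 = x) {t : ℝ} (ht : t ∈ Ico 0 h) : f t ∉ S :=
  fun hft ↦ ht.2.not_ge (hh.2 ⟨ht.1, f, hf, hf₀, hft⟩)

end TravelTimes

section ShortestArcs

theorem isClosed_travelTimes {X : Type*} [MetricSpace X] [CompactSpace X] (x : X) {S : Set X}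
    (hS : IsClosed S) : IsClosed (travelTimes x S) := by
  let F : Set (ℝ × (ℝ → X)) := {p | LipschitzWith 1 p.2} ∩ (fun p ↦ p.2 p.1) ⁻¹' S
  have hF : IsClosed F := (continuousOn_eval_lipschitzWith 1).preimage_isClosed_of_isClosed
    ((isClosed_setOfPred_lipschitzWith 1).preimage continuous_snd) hS
  have hx : IsClosed {p : ℝ × (ℝ → X) | p.2 0 = x} := isClosed_eq (by fun_prop) (by fun_prop)
  have hS' : travelTimes x S = Ici 0 ∩ Prod.fst '' (F ∩ {p | p.2 0 = x}) := by
    ext h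
    simp [travelTimes, F, and_assoc, and_comm]
  rw [hS']
  exact isClosed_Ici.inter (isClosedMap_fst_of_compactSpace _ (hF.inter hx))

theorem exists_lipschitzWith_one_reparam {X : Type*} [MetricSpace X] {f : ℝ → X} {φ : ℝ → ℝ}
    {a b : ℝ} (hab : a ≤ b) (hφ : ContinuousOn φ (Icc a b)) (hφab : φ a ≤ φ b)
    (hf : ∀ s ∈ Icc a b, ∀ t ∈ Icc a b, dist (f s) (f t) ≤ dist (φ s) (φ t)) :
    ∃ g, LipschitzWith 1 g ∧ g (φ a) = f a ∧ g (φ b) = f b := by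
  have hτ : ∀ u ∈ Icc (φ a) (φ b), ∃ t ∈ Icc a b, φ t = u := intermediate_value_Icc hab hφ
  choose! τ hτ hφτ using hτ
  have hg {t : ℝ} (ht : t ∈ Icc a b) (hφt : φ t ∈ Icc (φ a) (φ b)) : f (τ (φ t)) = f t := by
    rw [← dist_le_zero]
    simpa [hφτ _ hφt] using hf _ (hτ _ hφt) t ht
  refine ⟨fun u ↦ f (τ (projIcc _ _ hφab u)), LipschitzWith.of_dist_le_mul fun u v ↦ ?_, ?_, ?_⟩
  · have hu := (projIcc _ _ hφab u).2
    have hv := (projIcc _ _ hφab v).2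
    refine (hf _ (hτ _ hu) _ (hτ _ hv)).trans ?_
    rw [hφτ _ hu, hφτ _ hv]
    exact (LipschitzWith.projIcc hφab).dist_le_mul u v
  · simpa using hg (left_mem_Icc.2 hab) (left_mem_Icc.2 hφab)
  · simpa using hg (right_mem_Icc.2 hab) (right_mem_Icc.2 hφab)

variable {X : Type*} [MetricSpace X] [MeasurableSpace X] [BorelSpace X]
  {x : X} {S : Set X} {f : ℝ → X} {a h s t : ℝ}

theorem measureReal_image_Icc_le_add (hf : LipschitzWith 1 f) (hs : a ≤ s) (hst : s ≤ t) :
    μH[1].real (f '' Icc a t) ≤ μH[1].real (f '' Icc a s) + (t - s) := by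
  have hst' : μH[1].real (f '' Icc s t) ≤ t - s := by
    refine ENNReal.toReal_le_of_le_ofReal (sub_nonneg.2 hst) ?_
    simpa [hausdorffMeasure_real] using hf.hausdorffMeasure_image_le zero_le_one (Icc s t)
  rw [← Icc_union_Icc_eq_Icc hs hst, image_union]
  exact (measureReal_union_le _ _).trans (by gcongr)

variable [IsFiniteMeasure (μH[1] : Measure X)]

theorem measureReal_image_Icc_add_dist_le (hf : Continuous f) (hinj : InjOn f (Icc a h))
    (hs : a ≤ s) (hst : s ≤ t) (ht : t ≤ h) :
    μH[1].real (f '' Icc a s) + dist (f s) (f t) ≤ μH[1].real (f '' Icc a t) := by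
  have := Measure.nullSingletonClass_hausdorff X one_pos
  have hdist : dist (f s) (f t) ≤ μH[1].real (f '' Ioc s t) := by
    have hpre : IsPreconnected (f '' Icc s t) := isPreconnected_Icc.image f hf.continuousOn
    have hle := ofReal_dist_le_hausdorffMeasure hpre (mem_image_of_mem f (left_mem_Icc.2 hst))
      (mem_image_of_mem f (right_mem_Icc.2 hst))
    rw [← Ioc_insert_left hst, image_insert_eq, measure_congr (insert_ae_eq_self _ _)] at hle
    exact (ENNReal.ofReal_le_iff_le_toReal (measure_ne_top _ _)).1 hle
  have hdisj : Disjoint (f '' Icc a s) (f '' Ioc s t) :=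
    (disjoint_left.2 fun _ h₁ h₂ ↦ h₂.1.not_ge h₁.2).image hinj
      (Icc_subset_Icc_right (hst.trans ht)) (Ioc_subset_Icc_self.trans (Icc_subset_Icc hs ht))
  rw [← Icc_union_Ioc_eq_Icc hs hst, image_union,
    measureReal_union' hdisj (isCompact_Icc.image hf).measurableSet]
  gcongr

-- Parametrizing the curve by the measure `φ` of its initial pieces keeps its speed at most one, so
-- by minimality it cannot shorten the travel time.
theorem le_measureReal_image_of_isLeast_travelTimes (hh : IsLeast (travelTimes x S) h)
    (hf : LipschitzWith 1 f) (hf₀ : f 0 = x) (hfh : f h ∈ S) :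
    h ≤ μH[1].real (f '' Icc 0 h) := by
  have := Measure.nullSingletonClass_hausdorff X one_pos
  let φ (t : ℝ) : ℝ := μH[1].real (f '' Icc 0 t)
  have hφ₀ : φ 0 = 0 := by simp [φ, measureReal_def]
  have hinj := injOn_of_isLeast_travelTimes hh hf hf₀ hfh
  have hφ : LipschitzOnWith 1 φ (Icc 0 h) := LipschitzOnWith.of_le_add fun s _ t ht ↦ by
    obtain hst | hts := le_total s t
    · exact (measureReal_mono (image_mono (Icc_subset_Icc_right hst))).trans
        (le_add_of_nonneg_right dist_nonneg)
    · simpa [Real.dist_eq, abs_of_nonneg (sub_nonneg.2 hts)] using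
        measureReal_image_Icc_le_add hf ht.1 hts
  have hdist : ∀ s ∈ Icc 0 h, ∀ t ∈ Icc 0 h, dist (f s) (f t) ≤ dist (φ s) (φ t) := by
    intro s hs t ht
    wlog hst : s ≤ t generalizing s t
    · rw [dist_comm, dist_comm (φ s)]
      exact this t ht s hs (le_of_not_ge hst)
    rw [dist_comm (φ s)]
    exact (le_sub_iff_add_le'.2 <|
      measureReal_image_Icc_add_dist_le hf.continuous hinj hs.1 hst ht.2).trans (le_abs_self _)
  have hφh : φ 0 ≤ φ h := hφ₀.trans_le measureReal_nonneg
  obtain ⟨g, hg, hg₀, hgh⟩ :=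
    exists_lipschitzWith_one_reparam hh.1.1 hφ.continuousOn hφh hdist
  rw [hφ₀] at hg₀ hφh
  exact hh.2 ⟨hφh, g, hg, hg₀.trans hf₀, hgh ▸ hfh⟩

theorem exists_arc_to_isClosed [CompactSpace X] [PreconnectedSpace X] (x : X) (hS : IsClosed S)
    (hne : S.Nonempty) :
    ∃ h, 0 ≤ h ∧ ∃ b : ℝ → X, LipschitzWith 1 b ∧ b 0 = x ∧ b h ∈ S ∧
      h ≤ μH[1].real (b '' Icc 0 h \ S) := by
  have := Measure.nullSingletonClass_hausdorff X one_pos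
  obtain ⟨y, hy⟩ := hne
  obtain ⟨T, hT, p, hp, hp₀, hpT⟩ := exists_lipschitzWith_one_path x y
  have hleast := (isClosed_travelTimes x hS).isLeast_csInf ⟨T, hT, p, hp, hp₀, hpT ▸ hy⟩
    ⟨0, fun _ ht ↦ ht.1⟩
  obtain ⟨hh, b, hb, hb₀, hbh⟩ := hleast.1
  set h := sInf (travelTimes x S)
  have hsub : b '' Icc 0 h ⊆ insert (b h) (b '' Icc 0 h \ S) := by
    rintro _ ⟨t, ht, rfl⟩
    obtain rfl | hlt := ht.2.eq_or_lt
    · exact mem_insert _ _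
    · exact mem_insert_of_mem _
        ⟨mem_image_of_mem b ht, notMem_of_isLeast_travelTimes hleast hb hb₀ ⟨ht.1, hlt⟩⟩
  refine ⟨h, hh, b, hb, hb₀, hbh, ?_⟩
  calc
    h ≤ μH[1].real (b '' Icc 0 h) := le_measureReal_image_of_isLeast_travelTimes hleast hb hb₀ hbh
    _ ≤ μH[1].real (insert (b h) (b '' Icc 0 h \ S)) := measureReal_mono hsub
    _ = μH[1].real (b '' Icc 0 h \ S) := measureReal_congr (insert_ae_eq_self _ _)

end ShortestArcs

section EfficientCurves

theorem exists_dist_eq_diam_univ (X : Type*) [PseudoMetricSpace X] [CompactSpace X] [Nonempty X] :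
    ∃ x y : X, dist x y = diam (univ : Set X) := by
  obtain ⟨⟨x, y⟩, -, hmax⟩ := isCompact_univ.exists_isMaxOn (univ_nonempty (α := X × X))
    continuous_dist.continuousOn
  exact ⟨x, y, (dist_le_diam_of_mem isBounded_of_compactSpace (mem_univ x) (mem_univ y)).antisymm
    (diam_le_of_forall_dist_le dist_nonneg fun z _ w _ ↦ hmax (mem_univ (z, w)))⟩

variable {X : Type*} [MetricSpace X] [MeasurableSpace X] [BorelSpace X]

/-- A curve of speed at most one on `[0, a]` that satisfies the length bound of the theorem with
the measure of the whole space replaced by the measure of the image. -/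
structure IsEfficientCurve (g : ℝ → X) (a : ℝ) : Prop where
  nonneg : 0 ≤ a
  lipschitz : LipschitzWith 1 g
  add_diam_le : a + diam (univ : Set X) ≤ 2 * μH[1].real (g '' Icc 0 a)

variable [IsFiniteMeasure (μH[1] : Measure X)] {g : ℝ → X} {a : ℝ}

theorem IsEfficientCurve.le_two_mul_sub (hg : IsEfficientCurve g a) :
    a ≤ 2 * μH[1].real (univ : Set X) - diam (univ : Set X) := by
  have hmono : μH[1].real (g '' Icc 0 a) ≤ μH[1].real univ := measureReal_mono (subset_univ _)
  linarith [hg.add_diam_le]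

variable [CompactSpace X]

theorem exists_isEfficientCurve [ConnectedSpace X] :
    ∃ (g : ℝ → X) (a : ℝ), IsEfficientCurve g a := by
  obtain ⟨x, y, hxy⟩ := exists_dist_eq_diam_univ X
  obtain ⟨h, hh, b, hb, hb₀, hbh, hle⟩ :=
    exists_arc_to_isClosed x isClosed_singleton (singleton_nonempty y)
  rw [mem_singleton_iff] at hbh
  have hdiam : diam (univ : Set X) ≤ h := by
    simpa [← hxy, hb₀, hbh, abs_of_nonneg hh] using hb.dist_le_mul 0 h
  have hmono : μH[1].real (b '' Icc 0 h \ {y}) ≤ μH[1].real (b '' Icc 0 h) :=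
    measureReal_mono sdiff_subset
  exact ⟨b, h, hh, hb, by linarith⟩

theorem IsEfficientCurve.exists_extension [PreconnectedSpace X] (hg : IsEfficientCurve g a)
    {x : X} {ε : ℝ} (hx : ∀ t ∈ Icc 0 a, ε ≤ dist x (g t)) :
    ∃ (g' : ℝ → X) (a' : ℝ), IsEfficientCurve g' a' ∧
      μH[1].real (g '' Icc 0 a) + ε ≤ μH[1].real (g' '' Icc 0 a') := by
  have hS : IsClosed (g '' Icc 0 a) := (isCompact_Icc.image hg.lipschitz.continuous).isClosed
  obtain ⟨h, hh, b, hb, hb₀, ⟨c, hc, hbh⟩, hle⟩ :=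
    exists_arc_to_isClosed x hS ((nonempty_Icc.2 hg.nonneg).image g)
  obtain ⟨g', hg', hsub⟩ := exists_lipschitzWith_excursion hg.lipschitz hb hh hc hbh.symm
  have hεh : ε ≤ h := by
    refine (hx c hc).trans ?_
    simpa [hbh, hb₀, abs_of_nonneg hh] using hb.dist_le_mul 0 h
  have hgain : μH[1].real (g '' Icc 0 a) + h ≤ μH[1].real (g' '' Icc 0 (a + 2 * h)) := by
    calc
      μH[1].real (g '' Icc 0 a) + h
          ≤ μH[1].real (g '' Icc 0 a) + μH[1].real (b '' Icc 0 h \ g '' Icc 0 a) := by gcongr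
      _ = μH[1].real (g '' Icc 0 a ∪ b '' Icc 0 h) := by
        rw [← measureReal_union' disjoint_sdiff_right hS.measurableSet, union_sdiff_self]
      _ ≤ μH[1].real (g' '' Icc 0 (a + 2 * h)) := measureReal_mono hsub
  exact ⟨g', a + 2 * h, ⟨by linarith [hg.nonneg], hg', by linarith [hg.add_diam_le]⟩,
    by linarith⟩

theorem exists_isEfficientCurve_dist_lt [ConnectedSpace X] {ε : ℝ} (hε : 0 < ε) :
    ∃ (g : ℝ → X) (a : ℝ), IsEfficientCurve g a ∧ ∀ x, ∃ t ∈ Icc 0 a, dist x (g t) < ε := by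
  by_contra! hfar
  let M : Set ℝ := {m | ∃ (g : ℝ → X) (a : ℝ), IsEfficientCurve g a ∧ μH[1].real (g '' Icc 0 a) = m}
  have hM : M.Nonempty := by
    obtain ⟨g, a, hg⟩ := exists_isEfficientCurve (X := X)
    exact ⟨_, g, a, hg, rfl⟩
  have hbdd : BddAbove M := by
    refine ⟨μH[1].real (univ : Set X), ?_⟩
    rintro _ ⟨g, a, -, rfl⟩
    exact measureReal_mono (subset_univ _)
  obtain ⟨_, ⟨g, a, hg, rfl⟩, hlt⟩ := exists_lt_of_lt_csSup hM (sub_lt_self (sSup M) hε)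
  obtain ⟨x, hx⟩ := hfar g a hg
  obtain ⟨g', a', hg', hle⟩ := hg.exists_extension hx
  linarith [le_csSup hbdd ⟨g', a', hg', rfl⟩]

end EfficientCurves

section SurjectiveCurves

theorem isClosed_setOf_forall_exists_dist_le {X : Type*} [PseudoMetricSpace X] (K : ℝ≥0) (L : ℝ) :
    IsClosed {q : ℝ × (ℝ → X) |
      LipschitzWith K q.2 ∧ ∀ x, ∃ t ∈ Icc 0 L, dist x (q.2 t) ≤ q.1} := by
  have hlip : IsClosed {q : ℝ × (ℝ → X) | LipschitzWith K q.2} :=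
    (isClosed_setOfPred_lipschitzWith K).preimage continuous_snd
  have hnear (x : X) : IsClosed {q : ℝ × (ℝ → X) |
      LipschitzWith K q.2 ∧ ∃ t ∈ Icc 0 L, dist x (q.2 t) ≤ q.1} := by
    let F : Set (Icc 0 L × (ℝ × (ℝ → X))) :=
      {p ∈ {p | LipschitzWith K p.2.2} | dist x (p.2.2 p.1) ≤ p.2.1}
    let timeAndCurve (p : Icc 0 L × (ℝ × (ℝ → X))) : ℝ × (ℝ → X) := (p.1, p.2.2)
    have heval : ContinuousOn (fun p : Icc 0 L × (ℝ × (ℝ → X)) ↦ p.2.2 p.1)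
        {p | LipschitzWith K p.2.2} :=
      (continuousOn_eval_lipschitzWith K).comp (f := timeAndCurve) (by fun_prop) fun _ hp ↦ hp
    have hF : IsClosed F :=
      (hlip.preimage continuous_snd).isClosed_le (by fun_prop) (by fun_prop)
    convert isClosedMap_snd_of_compactSpace F hF using 1
    ext q
    simp [F]
  convert hlip.inter (isClosed_iInter hnear) using 1
  ext q
  simp only [mem_inter_iff, mem_iInter, mem_ofPred_eq]
  exact ⟨fun h ↦ ⟨h.1, fun x ↦ ⟨h.1, h.2 x⟩⟩, fun h ↦ ⟨h.1, fun x ↦ (h.2 x).2⟩⟩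

theorem exists_lipschitzWith_image_Icc_eq_univ {X : Type*} [MetricSpace X] [CompactSpace X]
    {K : ℝ≥0} {L : ℝ}
    (h : ∀ ε > 0, ∃ g : ℝ → X, LipschitzWith K g ∧ ∀ x, ∃ t ∈ Icc 0 L, dist x (g t) ≤ ε) :
    ∃ g : ℝ → X, LipschitzWith K g ∧ g '' Icc 0 L = univ := by
  have hev : ∀ᶠ ε in 𝓝[>] (0 : ℝ), ∃ g : ℝ → X,
      LipschitzWith K g ∧ ∀ x, ∃ t ∈ Icc 0 L, dist x (g t) ≤ ε :=
    eventually_mem_nhdsWithin.mono h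
  obtain ⟨g, hg, hdense⟩ := exists_mem_fst_eq_of_isClosed
    (isClosed_setOf_forall_exists_dist_le K L) nhdsWithin_le_nhds hev
  refine ⟨g, hg, eq_univ_of_forall fun x ↦ ?_⟩
  obtain ⟨t, ht, hxt⟩ := hdense x
  exact ⟨t, ht, (dist_le_zero.1 hxt).symm⟩

theorem eVariationOn_Icc_le_of_lipschitzWith {X : Type*} [PseudoEMetricSpace X] {K : ℝ≥0}
    {f : ℝ → X} (hf : LipschitzWith K f) (a b : ℝ) :
    eVariationOn f (Icc a b) ≤ K * ENNReal.ofReal (b - a) := by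
  simpa using hf.lipschitzOnWith.comp_eVariationOn_le (mapsTo_univ id (Icc a b))

theorem exists_lipschitzWith_image_unitInterval_eq_univ {X : Type*} [MetricSpace X]
    [MeasurableSpace X] [BorelSpace X] [CompactSpace X] [ConnectedSpace X]
    [IsFiniteMeasure (μH[1] : Measure X)] :
    ∃ γ : ℝ → X, LipschitzWith (2 * μH[1].real (univ : Set X) - diam (univ : Set X)).toNNReal γ ∧
      γ '' Icc 0 1 = univ := by
  set L := 2 * μH[1].real (univ : Set X) - diam (univ : Set X)
  obtain ⟨g₀, a₀, hg₀⟩ := exists_isEfficientCurve (X := X)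
  have hL : 0 ≤ L := hg₀.nonneg.trans hg₀.le_two_mul_sub
  obtain ⟨g, hg, hgL⟩ : ∃ g : ℝ → X, LipschitzWith 1 g ∧ g '' Icc 0 L = univ := by
    refine exists_lipschitzWith_image_Icc_eq_univ fun ε hε ↦ ?_
    obtain ⟨g, a, hg, hdense⟩ := exists_isEfficientCurve_dist_lt (X := X) hε
    refine ⟨g, hg.lipschitz, fun x ↦ ?_⟩
    obtain ⟨t, ht, hxt⟩ := hdense x
    exact ⟨t, Icc_subset_Icc_right hg.le_two_mul_sub ht, hxt.le⟩
  refine ⟨fun t ↦ g (L * t), LipschitzWith.of_dist_le_mul fun s t ↦ ?_, ?_⟩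
  · simpa [Real.dist_eq, ← mul_sub, abs_mul, abs_of_nonneg hL, hL] using
      hg.dist_le_mul (L * s) (L * t)
  · rw [← image_image, image_mul_left_Icc hL zero_le_one, mul_zero, mul_one, hgL]

end SurjectiveCurves

/-- A continuum `K` of finite Hausdorff 1-measure is the image of a curve
`γ : [0,1] → K` with length at most `2·H¹(K) − diam K`. -/
theorem continuum_finite_H1_exists_curve {X : Type*} [MetricSpace X]
    [MeasurableSpace X] [BorelSpace X] (K : Set X)
    (hcomp : IsCompact K) (hconn : IsConnected K)
    (hfin : μH[1] K < ⊤) :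
    ∃ γ : ℝ → X, ContinuousOn γ (Set.Icc 0 1) ∧ γ '' Set.Icc 0 1 = K ∧
      eVariationOn γ (Set.Icc 0 1) ≤ 2 * μH[1] K - EMetric.diam K := by
  have hval : Isometry (Subtype.val : K → X) := isometry_subtype_coe
  have hμ : μH[1] (univ : Set K) = μH[1] K := by
    simpa using (hval.hausdorffMeasure_image (Or.inl zero_le_one) univ).symm
  have hdiam : diam (univ : Set K) = diam K := by simpa using (hval.diam_image univ).symm
  have : CompactSpace K := isCompact_iff_compactSpace.1 hcomp
  have : ConnectedSpace K := isConnected_iff_connectedSpace.1 hconn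
  have : IsFiniteMeasure (μH[1] : Measure K) := ⟨hμ ▸ hfin⟩
  obtain ⟨γ, hγ, hsurj⟩ := exists_lipschitzWith_image_unitInterval_eq_univ (X := K)
  have hlip := hval.lipschitz.comp hγ
  refine ⟨Subtype.val ∘ γ, hlip.continuous.continuousOn, ?_, ?_⟩
  · rw [image_comp, hsurj, image_univ, Subtype.range_coe]
  calc
    eVariationOn (Subtype.val ∘ γ) (Icc 0 1)
        ≤ ENNReal.ofReal (2 * μH[1].real (univ : Set K) - diam (univ : Set K)) := by
      simpa [ENNReal.ofReal] using eVariationOn_Icc_le_of_lipschitzWith hlip 0 1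
    _ = 2 * μH[1] K - ediam K := by
      rw [ENNReal.ofReal_sub _ diam_nonneg, ENNReal.ofReal_mul zero_le_two, ofReal_measureReal,
        hμ, hdiam, diam, ENNReal.ofReal_toReal hcomp.isBounded.ediam_ne_top, ENNReal.ofReal_ofNat]
end

section
/- Let {K_i}_{i ∈ I} be a collection of pairwise disjoint Peano continua in ℝ². Then, with the exception of at most countably many indices i ∈ I, each K_i is a Jordan arc or a Jordan curve. -/
/-- A Jordan arc in the plane: a homeomorphic (continuous injective) image of a
closed interval `[a,b]` (possibly degenerate, `a = b`). -/
def IsJordanArc (K : Set (ℝ × ℝ)) : Prop :=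
  ∃ (a b : ℝ) (f : ℝ → ℝ × ℝ), a ≤ b ∧ ContinuousOn f (Set.Icc a b) ∧
    Set.InjOn f (Set.Icc a b) ∧ f '' Set.Icc a b = K

/-- A Jordan curve in the plane: a homeomorphic image of the circle. -/
def IsJordanCurve (K : Set (ℝ × ℝ)) : Prop :=
  ∃ f : AddCircle (1 : ℝ) → ℝ × ℝ,
    Continuous f ∧ Function.Injective f ∧ Set.range f = K

/-!
Moore's theorem holds for *weak triods*, whose legs are continua rather than arcs and may meet
outside the center. Uncountably many of them would include three that are separated by the same
three small balls. If these three were disjoint, thickening their legs would give nine paths from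
three centers to three common endpoints, in which paths from different centers to different
endpoints are disjoint, as in a planar drawing of `K₃,₃`. This is excluded by a parity argument: a
continuous logarithm of the difference of two disjoint curves shows that an integer attached to
each of the three stars, which counts crossings of the branch cut, changes parity between any two
of them.

A Peano continuum `X` without weak triods is an arc or a circle. If `{x}` or `{a, b}` separates
`X` into closed sides `A` and `B`, then the continua in `A` through a separating point form a
chain, since two incomparable ones would be the legs of a weak triod with third leg `B`. The size
of the intersection of the continua from this point to `z` is then a continuous injective function
of `z ∈ A`. Gluing it to its counterpart on `B` embeds `X` in `ℝ` if there is a cut point, and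
otherwise maps it bijectively to a circle. If no pair of points separates `X`, three paths that
avoid each other's ends form a weak triod, unless `X` is a single point.
-/

open Set Filter Topology Metric

section CurveCrossings

open Complex

lemma exists_continuous_log {A : Type*} [TopologicalSpace A] [SimplyConnectedSpace A]
    [LocallyPathConnectedSpace A] {f : A → ℂ} (hf : Continuous f) (hf₀ : ∀ x, f x ≠ 0) :
    ∃ l : A → ℂ, Continuous l ∧ ∀ x, exp (l x) = f x := by
  obtain ⟨x₀⟩ : Nonempty A := inferInstance
  obtain ⟨l, ⟨-, hl⟩, -⟩ := isCoveringMapOn_exp.existsUnique_continuousMap_lifts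
    ⟨f, hf⟩ (exp_log (hf₀ x₀)) hf₀
  exact ⟨l, l.continuous, congrFun hl⟩

lemma sub_eq_sub_of_exp_eq_exp {A : Type*} [TopologicalSpace A] [SimplyConnectedSpace A]
    [LocallyPathConnectedSpace A] {l m : A → ℂ} (hl : Continuous l) (hm : Continuous m)
    (h : ∀ x, exp (l x) = exp (m x)) (x y : A) : l x - m x = l y - m y := by
  obtain ⟨L, -, hL⟩ := isCoveringMapOn_exp.existsUnique_continuousMap_lifts
    (⟨fun x => exp (m x), by fun_prop⟩ : C(A, ℂ)) (a₀ := y) (e₀ := l y) (h y)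
    fun x => exp_ne_zero _
  have hlL : ⟨l, hl⟩ = L := hL ⟨l, hl⟩ ⟨rfl, funext h⟩
  have hmL : ⟨fun x => m x + (l y - m y), by fun_prop⟩ = L := by
    refine hL _ ⟨by simp, funext fun x => ?_⟩
    simp [exp_add, exp_sub, h y]
  have hlm := congr($(hlL.trans hmL.symm) x)
  simpa [sub_eq_iff_eq_add'] using hlm

/-- The signed number of times that `f : ℝ → ℂ`, restricted to `[0, 1]`, crosses the branch cut of
`Complex.log`: over `[0, 1]` a continuous logarithm of `f` grows by
`log (f 1) - log (f 0) + turns f * (2 * π * I)`. The value is meaningless when `f` has no continuous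
logarithm. -/
noncomputable def turns (f : ℝ → ℂ) : ℤ :=
  Classical.epsilon fun n : ℤ => ∀ l : ℝ → ℂ, Continuous l → (∀ x, exp (l x) = f x) →
    l 1 - l 0 = log (f 1) - log (f 0) + n * (2 * Real.pi * I)

lemma sub_eq_log_sub_log_add_turns {f l : ℝ → ℂ} (hl : Continuous l)
    (hlf : ∀ x, exp (l x) = f x) :
    l 1 - l 0 = log (f 1) - log (f 0) + turns f * (2 * Real.pi * I) := by
  have hf (x : ℝ) : f x ≠ 0 := hlf x ▸ exp_ne_zero _
  obtain ⟨n, hn⟩ : ∃ n : ℤ, l 1 - l 0 = log (f 1) - log (f 0) + n * (2 * Real.pi * I) := by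
    rw [← exp_eq_exp_iff_exists_int]
    simp only [exp_sub, hlf, exp_log (hf _)]
  refine Classical.epsilon_spec (p := fun n : ℤ => ∀ l : ℝ → ℂ, Continuous l →
    (∀ x, exp (l x) = f x) → l 1 - l 0 = log (f 1) - log (f 0) + n * (2 * Real.pi * I))
    ⟨n, fun m hm hmf => ?_⟩ l hl hlf
  have hlm := sub_eq_sub_of_exp_eq_exp hl hm (fun x => (hlf x).trans (hmf x).symm) 1 0
  linear_combination hn - hlm

/-- The sign `±1` that measures, in half turns, the jump of `Complex.log` between `-z` and `z`. -/
noncomputable def halfTurn (z : ℂ) : ℤ := if 0 < z.arg then 1 else -1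

lemma odd_halfTurn (z : ℂ) : Odd (halfTurn z) := by
  unfold halfTurn
  split_ifs <;> decide

lemma log_sub_log_neg {z : ℂ} (hz : z ≠ 0) :
    log z - log (-z) = halfTurn z * (Real.pi * I) := by
  have harg : z.arg - (-z).arg = halfTurn z * Real.pi := by
    unfold halfTurn
    split_ifs with hz'
    · rw [arg_neg_eq_arg_sub_pi_iff.2 (by grind [arg_nonneg_iff, arg_eq_zero_iff])]
      simp
    · rw [arg_neg_eq_arg_add_pi_iff.2 (by
        grind [arg_neg_iff, arg_eq_zero_iff, Complex.ext_iff, zero_re, zero_im])]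
      simp
  rw [log, log, norm_neg, add_sub_add_left_eq_sub, ← sub_mul, ← mul_assoc]
  exact_mod_cast congr(($harg : ℂ) * I)

lemma halfTurn_neg {z : ℂ} (hz : z ≠ 0) : halfTurn (-z) = -halfTurn z := by
  have h := log_sub_log_neg (neg_ne_zero.2 hz)
  rw [neg_neg, ← neg_sub, log_sub_log_neg hz, ← neg_mul] at h
  exact_mod_cast (mul_right_cancel₀ (by simp [Real.pi_ne_zero]) h).symm

lemma turns_add_turns {f g : ℝ → ℂ} (hf : Continuous f) (hg : Continuous g)
    (hfg : ∀ x y, f x ≠ g y) :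
    halfTurn (f 1 - g 0) + halfTurn (g 1 - f 1) + halfTurn (g 0 - f 0) + halfTurn (f 0 - g 1) =
      2 * (turns (f · - g 1) + turns (g · - f 0) - turns (f · - g 0) - turns (g · - f 1)) := by
  -- The half turns are the jumps at the corners between a continuous logarithm of `f x - g y` and
  -- the principal one, followed around the boundary of the unit square.
  obtain ⟨l, hl, hlfg⟩ := exists_continuous_log (f := fun z : ℝ × ℝ => f z.1 - g z.2)
    (by fun_prop) fun z => sub_ne_zero.2 (hfg _ _)
  have hfix (y : ℝ) := sub_eq_log_sub_log_add_turns (f := (f · - g y)) (l := fun x => l (x, y))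
    (by fun_prop) fun x => hlfg (x, y)
  have hgix (x : ℝ) := sub_eq_log_sub_log_add_turns (f := (g · - f x))
    (l := fun y => l (x, y) + Real.pi * I) (by fun_prop) fun y => by
      simp [exp_add, hlfg]
  have hjump (x y : ℝ) := log_sub_log_neg (sub_ne_zero.2 (hfg x y))
  have hjump' (x y : ℝ) := log_sub_log_neg (sub_ne_zero.2 (hfg x y).symm)
  simp only [neg_sub] at hjump hjump'
  have key : ((halfTurn (f 1 - g 0) + halfTurn (g 1 - f 1) + halfTurn (g 0 - f 0) +
      halfTurn (f 0 - g 1) : ℤ) : ℂ) * (Real.pi * I) = (2 * (turns (f · - g 1) + turns (g · - f 0) -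
        turns (f · - g 0) - turns (g · - f 1)) : ℤ) * (Real.pi * I) := by
    push_cast
    linear_combination hfix 1 - hfix 0 + hgix 0 - hgix 1 - hjump 1 0 - hjump' 1 1 - hjump' 0 0
      - hjump 0 1
  exact_mod_cast mul_right_cancel₀ (by simp [Real.pi_ne_zero]) key

/-- The number of cut crossings of the three curves `γ j`, each seen from the endpoints `γ k 1` of
the other two. -/
noncomputable def starIndex (γ : Fin 3 → ℝ → ℂ) : ℤ :=
  ∑ j, ∑ k ∈ {j}ᶜ, turns (γ j · - γ k 1)

lemma odd_starIndex_sub_starIndex {γ δ : Fin 3 → ℝ → ℂ} {p q : ℂ} {b : Fin 3 → ℂ}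
    (hγ : ∀ j, Continuous (γ j)) (hδ : ∀ j, Continuous (δ j))
    (hγ₀ : ∀ j, γ j 0 = p) (hδ₀ : ∀ j, δ j 0 = q) (hγ₁ : ∀ j, γ j 1 = b j) (hδ₁ : ∀ j, δ j 1 = b j)
    (hγδ : ∀ j k, j ≠ k → ∀ x y, γ j x ≠ δ k y) : Odd (starIndex γ - starIndex δ) := by
  -- Summed over the three pairs of endpoints, the left-hand side is twice an even number plus six
  -- times the odd number `halfTurn (q - p)`.
  have hpair (j k : Fin 3) (hjk : j ≠ k) :
      halfTurn (b j - q) + halfTurn (b k - q) - halfTurn (b j - p) - halfTurn (b k - p)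
        + 2 * halfTurn (q - p) =
      2 * (turns (γ j · - b k) + turns (δ k · - p) - turns (γ j · - q) - turns (δ k · - b j)) +
      2 * (turns (γ k · - b j) + turns (δ j · - p) - turns (γ k · - q) - turns (δ j · - b k)) := by
    have hbp (i m : Fin 3) (him : i ≠ m) : halfTurn (p - b m) = -halfTurn (b m - p) := by
      rw [← halfTurn_neg, neg_sub]
      simpa [hγ₀, hδ₁, sub_ne_zero, eq_comm] using hγδ i m him 0 1
    have hb : halfTurn (b j - b k) = -halfTurn (b k - b j) := by
      rw [← halfTurn_neg, neg_sub]
      simpa [hγ₁, hδ₁, sub_ne_zero, eq_comm] using hγδ j k hjk 1 1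
    have h₁ := turns_add_turns (hγ j) (hδ k) (hγδ j k hjk)
    have h₂ := turns_add_turns (hγ k) (hδ j) (hγδ k j hjk.symm)
    simp only [hγ₀, hδ₀, hγ₁, hδ₁, hbp j k hjk, hbp k j hjk.symm, hb] at h₁ h₂
    linarith
  have hcompl : ({0}ᶜ : Finset (Fin 3)) = {1, 2} ∧ ({1}ᶜ : Finset (Fin 3)) = {0, 2} ∧
      ({2}ᶜ : Finset (Fin 3)) = {0, 1} := by decide
  obtain ⟨u, hu⟩ := odd_halfTurn (q - p)
  have h₀₁ := hpair 0 1 (by decide)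
  have h₀₂ := hpair 0 2 (by decide)
  have h₁₂ := hpair 1 2 (by decide)
  have heven : Even (∑ j, (halfTurn (b j - q) - halfTurn (b j - p))) :=
    Finset.even_sum _ fun j _ => (odd_halfTurn _).sub_odd (odd_halfTurn _)
  obtain ⟨v, hv⟩ := heven
  simp only [starIndex, Fin.sum_univ_three, hcompl, hγ₁, hδ₁, Int.odd_iff] at hv ⊢
  rw [Finset.sum_pair (by decide), Finset.sum_pair (by decide), Finset.sum_pair (by decide),
    Finset.sum_pair (by decide), Finset.sum_pair (by decide), Finset.sum_pair (by decide)]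
  omega

theorem exists_path_not_disjoint_of_three_stars {p b : Fin 3 → ℂ}
    (γ : ∀ t j, Path (p t) (b j)) :
    ∃ t s j k, t ≠ s ∧ j ≠ k ∧ ¬ Disjoint (Set.range (γ t j)) (Set.range (γ s k)) := by
  by_contra! h
  have hodd (t s : Fin 3) (hts : t ≠ s) :
      Odd (starIndex (fun j => (γ t j).extend) - starIndex (fun j => (γ s j).extend)) := by
    refine odd_starIndex_sub_starIndex (fun j => (γ t j).continuous_extend)
      (fun j => (γ s j).continuous_extend) (fun j => (γ t j).extend_zero)
      (fun j => (γ s j).extend_zero) (fun j => (γ t j).extend_one)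
      (fun j => (γ s j).extend_one) fun j k hjk x y => ?_
    have hd := h t s j k hts hjk
    rw [← (γ t j).extend_range, ← (γ s k).extend_range] at hd
    exact hd.ne_of_mem (Set.mem_range_self x) (Set.mem_range_self y)
  have h₀₁ := hodd 0 1 (by decide)
  have h₁₂ := hodd 1 2 (by decide)
  have h₀₂ := hodd 0 2 (by decide)
  simp only [Int.odd_iff] at h₀₁ h₁₂ h₀₂
  omega

end CurveCrossings

section Thickening

lemma isPreconnected_thickening {E : Type*} [SeminormedAddCommGroup E] [NormedSpace ℝ E]
    {s : Set E} (hs : IsPreconnected s) (δ : ℝ) : IsPreconnected (thickening δ s) := by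
  rw [← add_ball_zero, ← add_image_prod]
  exact (hs.prod (convex_ball _ _).isPreconnected).image _ continuous_add.continuousOn

lemma eventually_disjoint_thickening {X : Type*} [PseudoMetricSpace X] {s t : Set X}
    (hst : Disjoint s t) (hs : IsCompact s) (ht : IsClosed t) :
    ∀ᶠ δ in 𝓝[>] (0 : ℝ), Disjoint (thickening δ s) (thickening δ t) := by
  obtain ⟨ε, hε, hd⟩ := hst.exists_thickenings hs ht
  filter_upwards [Ioc_mem_nhdsGT hε] with δ hδ
  exact hd.mono (thickening_mono hδ.2 s) (thickening_mono hδ.2 t)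

lemma exists_path_disjoint_of_isPreconnected {E κ : Type*} [NormedAddCommGroup E]
    [NormedSpace ℝ E] [Finite κ] {s : κ → Set E} (hs : ∀ i, IsCompact (s i))
    (hsc : ∀ i, IsPreconnected (s i)) {a b : κ → E} (ha : ∀ i, a i ∈ s i) (hb : ∀ i, b i ∈ s i) :
    ∃ γ : ∀ i, Path (a i) (b i),
      ∀ i k, Disjoint (s i) (s k) → Disjoint (range (γ i)) (range (γ k)) := by
  have hδ : ∀ᶠ δ in 𝓝[>] (0 : ℝ), ∀ i k, Disjoint (s i) (s k) →
      Disjoint (thickening δ (s i)) (thickening δ (s k)) := by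
    simp only [eventually_all]
    exact fun i k hik => eventually_disjoint_thickening hik (hs i) (hs k).isClosed
  obtain ⟨δ, hd, hδ⟩ := (hδ.and self_mem_nhdsWithin).exists
  have hjoin (i : κ) : JoinedIn (thickening δ (s i)) (a i) (b i) := by
    have hsub := self_subset_thickening hδ (s i)
    have hconn : IsConnected (thickening δ (s i)) :=
      ⟨⟨a i, hsub (ha i)⟩, isPreconnected_thickening (hsc i) δ⟩
    exact (isOpen_thickening.isConnected_iff_isPathConnected.1 hconn).joinedIn _ (hsub (ha i)) _
      (hsub (hb i))
  exact ⟨fun i => (hjoin i).somePath, fun i k hik => (hd i k hik).mono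
    (range_subset_iff.2 (hjoin i).somePath_mem) (range_subset_iff.2 (hjoin k).somePath_mem)⟩

end Thickening

section WeakTriods

/-- A relaxed triod: three continua (the legs) through a common point (the center), each with a
distinguished point (its foot) that avoids the other two legs. Unlike those of a triod, the legs
need not be arcs and may meet outside the center. -/
structure WeakTriod (X : Type*) [TopologicalSpace X] where
  center : X
  foot : Fin 3 → X
  leg : Fin 3 → Set X
  isCompact_leg (j : Fin 3) : IsCompact (leg j)
  isPreconnected_leg (j : Fin 3) : IsPreconnected (leg j)
  center_mem_leg (j : Fin 3) : center ∈ leg j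
  foot_mem_leg_iff {j k : Fin 3} : foot j ∈ leg k ↔ j = k

namespace WeakTriod

variable {X Y : Type*}

/-- The union of the legs of a weak triod. -/
def carrier [TopologicalSpace X] (T : WeakTriod X) : Set X := ⋃ j, T.leg j

/-- The image of a weak triod under a continuous injective map. -/
def map [TopologicalSpace X] [TopologicalSpace Y] (T : WeakTriod X) {f : X → Y}
    (hf : Continuous f) (hfi : Function.Injective f) : WeakTriod Y where
  center := f T.center
  foot j := f (T.foot j)
  leg j := f '' T.leg j
  isCompact_leg j := (T.isCompact_leg j).image hf
  isPreconnected_leg j := (T.isPreconnected_leg j).image f hf.continuousOn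
  center_mem_leg j := mem_image_of_mem f (T.center_mem_leg j)
  foot_mem_leg_iff := hfi.mem_set_image.trans T.foot_mem_leg_iff

lemma carrier_map_subset_range [TopologicalSpace X] [TopologicalSpace Y] (T : WeakTriod X)
    {f : X → Y} (hf : Continuous f) (hfi : Function.Injective f) :
    (T.map hf hfi).carrier ⊆ range f :=
  iUnion_subset fun j => image_subset_range f (T.leg j)

/-- The closed balls of radius `r` around the points `q j` separate the feet of `T`: the `j`-th one
contains the `j`-th foot and is disjoint from the other two legs and balls. -/
structure SeparatedBy [PseudoMetricSpace X] (T : WeakTriod X) (q : Fin 3 → X) (r : ℝ) : Prop where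
  foot_mem_closedBall (j : Fin 3) : T.foot j ∈ closedBall (q j) r
  disjoint_leg {j k : Fin 3} : j ≠ k → Disjoint (closedBall (q j) r) (T.leg k)
  disjoint_closedBall {j k : Fin 3} : j ≠ k → Disjoint (closedBall (q j) r) (closedBall (q k) r)

lemma exists_separatedBy [MetricSpace X] (T : WeakTriod X) {q : ℕ → Fin 3 → X}
    (hq : DenseRange q) : ∃ m n : ℕ, T.SeparatedBy (q m) (1 / (n + 1)) := by
  have hev (j k : Fin 3) : ∀ᶠ δ in 𝓝[>] (0 : ℝ), j ≠ k →
      Disjoint (thickening δ {T.foot j}) (thickening δ (T.leg k)) ∧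
      Disjoint (thickening δ {T.foot j}) (thickening δ {T.foot k}) := by
    rcases eq_or_ne j k with rfl | hjk
    · simp
    · have hleg : T.foot j ∉ T.leg k := mt T.foot_mem_leg_iff.1 hjk
      have hfoot : T.foot j ≠ T.foot k :=
        fun h => hleg (h ▸ T.foot_mem_leg_iff.2 rfl)
      filter_upwards [eventually_disjoint_thickening (disjoint_singleton_left.2 hleg)
          isCompact_singleton (T.isCompact_leg k).isClosed,
        eventually_disjoint_thickening (disjoint_singleton.2 hfoot) isCompact_singleton
          isClosed_singleton] with δ h₁ h₂ _ using ⟨h₁, h₂⟩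
  obtain ⟨δ, hd, hδ⟩ := ((eventually_all.2 fun j => eventually_all.2 (hev j)).and
    self_mem_nhdsWithin).exists
  obtain ⟨n, hn⟩ := exists_nat_one_div_lt (half_pos hδ)
  obtain ⟨_, hm, m, rfl⟩ := hq.inter_open_nonempty
    (ball T.foot (1 / (n + 1))) isOpen_ball ⟨T.foot, mem_ball_self Nat.one_div_pos_of_nat⟩
  have hsub (j : Fin 3) : closedBall (q m j) (1 / (n + 1)) ⊆
      thickening δ {T.foot j} := by
    have hj := (dist_le_pi_dist _ _ j).trans_lt (mem_ball.1 hm)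
    rw [thickening_singleton]
    exact closedBall_subset_ball' (by linarith)
  refine ⟨m, n, fun j => ?_,
    fun {j k} hjk => (hd j k hjk).1.mono (hsub j) (self_subset_thickening hδ _),
    fun {j k} hjk => (hd j k hjk).2.mono (hsub j) (hsub k)⟩
  rw [mem_closedBall_comm]
  exact ((dist_le_pi_dist _ _ j).trans_lt (mem_ball.1 hm)).le

lemma exists_not_disjoint_carrier {q : Fin 3 → ℂ} {r : ℝ} (T : Fin 3 → WeakTriod ℂ)
    (hT : ∀ t, (T t).SeparatedBy q r) :
    ∃ t s, t ≠ s ∧ ¬ Disjoint (T t).carrier (T s).carrier := by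
  by_contra! h
  let s (i : Fin 3 × Fin 3) : Set ℂ := (T i.1).leg i.2 ∪ closedBall (q i.2) r
  have hs (i : Fin 3 × Fin 3) : IsCompact (s i) :=
    ((T i.1).isCompact_leg i.2).union (isCompact_closedBall _ _)
  have hsc (i : Fin 3 × Fin 3) : IsPreconnected (s i) :=
    ((T i.1).isPreconnected_leg i.2).union _ ((T i.1).foot_mem_leg_iff.2 rfl)
      ((hT i.1).foot_mem_closedBall i.2) (convex_closedBall _ _).isPreconnected
  have hq (i : Fin 3 × Fin 3) : q i.2 ∈ s i :=
    .inr <| mem_closedBall_self <|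
      dist_nonneg.trans (mem_closedBall.1 ((hT i.1).foot_mem_closedBall i.2))
  obtain ⟨γ, hγ⟩ := exists_path_disjoint_of_isPreconnected hs hsc
    (a := fun i => (T i.1).center) (b := fun i => q i.2)
    (fun i => .inl ((T i.1).center_mem_leg i.2)) hq
  obtain ⟨t, u, j, k, htu, hjk, hmeet⟩ :=
    exists_path_not_disjoint_of_three_stars (p := fun t => (T t).center) fun t j => γ (t, j)
  refine hmeet (hγ (t, j) (u, k) ?_)
  simp only [s, disjoint_union_left, disjoint_union_right]
  exact ⟨⟨(h t u htu).mono (subset_iUnion _ j) (subset_iUnion _ k),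
    (hT u).disjoint_leg hjk⟩, ((hT t).disjoint_leg hjk.symm).symm, (hT t).disjoint_closedBall hjk⟩

theorem countable_of_pairwise_disjoint {ι : Type*} (T : ι → WeakTriod ℂ)
    (hT : Pairwise (Function.onFun Disjoint fun i => (T i).carrier)) : Countable ι := by
  obtain ⟨q, hq⟩ := TopologicalSpace.exists_dense_seq (Fin 3 → ℂ)
  have hfin (m n : ℕ) : {i | (T i).SeparatedBy (q m) (1 / (n + 1))}.Finite := by
    by_contra hinf
    let e := Set.Infinite.natEmbedding _ hinf
    obtain ⟨t, s, hts, hmeet⟩ := exists_not_disjoint_carrier (fun t : Fin 3 => T (e t))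
      fun t => (e t).2
    exact hmeet (hT fun hes => hts (Fin.ext (e.injective (Subtype.ext hes))))
  rw [← countable_univ_iff]
  refine (countable_iUnion fun m => countable_iUnion fun n => (hfin m n).countable).mono
    fun i _ => ?_
  simpa only [mem_iUnion, mem_ofPred_eq] using (T i).exists_separatedBy hq

end WeakTriod

end WeakTriods

section Continua

variable {X : Type*}

lemma exists_isClosed_isPreconnected_mem_nhds_subset [TopologicalSpace X] [RegularSpace X]
    [LocallyConnectedSpace X] {x : X} {U : Set X} (hU : U ∈ 𝓝 x) :
    ∃ N ∈ 𝓝 x, IsClosed N ∧ IsPreconnected N ∧ N ⊆ U := by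
  obtain ⟨W, hW, hWc, hWU⟩ := exists_mem_nhds_isClosed_subset hU
  obtain ⟨V, hV, hVp, hVW⟩ := locallyConnectedSpace_iff_connected_subsets.1 inferInstance x W hW
  exact ⟨closure V, mem_of_superset hV subset_closure, isClosed_closure, hVp.closure,
    (closure_minimal hVW hWc).trans hWU⟩

/-- The closed connected sets through `x`; in a compact Hausdorff space these are the continua
through `x`. -/
def continuaThrough [TopologicalSpace X] (x : X) : Set (Set X) :=
  {C | IsClosed C ∧ IsPreconnected C ∧ x ∈ C}

/-- The intersection of the continua through `x` and `z`; it need not be connected. -/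
def continuumHull [TopologicalSpace X] (x z : X) : Set X := ⋂₀ {C ∈ continuaThrough x | z ∈ C}

section TopologicalSpace

variable [TopologicalSpace X] {x y z : X} {C N U : Set X}

lemma union_mem_continuaThrough (hC : C ∈ continuaThrough x) (hyC : y ∈ C)
    (hN : N ∈ continuaThrough y) : C ∪ N ∈ continuaThrough x :=
  ⟨hC.1.union hN.1, hC.2.1.union y hyC hN.2.2 hN.2.1, .inl hC.2.2⟩

lemma image_mem_continuaThrough {Y : Type*} [TopologicalSpace Y] {f : X → Y} (hf : Continuous f)
    (hfc : IsClosedMap f) (hC : C ∈ continuaThrough x) : f '' C ∈ continuaThrough (f x) :=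
  ⟨hfc C hC.1, hC.2.1.image f hf.continuousOn, mem_image_of_mem f hC.2.2⟩

lemma exists_mem_continuaThrough_subset [RegularSpace X] [LocallyConnectedSpace X]
    (hU : IsOpen U) (hUc : IsPreconnected U) (hx : x ∈ U) (hy : y ∈ U) :
    ∃ C ∈ continuaThrough x, y ∈ C ∧ C ⊆ U := by
  refine hUc.induction₂ (fun x y => ∃ C ∈ continuaThrough x, y ∈ C ∧ C ⊆ U) ?_ ?_ ?_ hx hy
  · intro z hz
    obtain ⟨N, hN, hNc, hNp, hNU⟩ :=
      exists_isClosed_isPreconnected_mem_nhds_subset (hU.mem_nhds hz)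
    filter_upwards [mem_nhdsWithin_of_mem_nhds hN] with w hw
    exact ⟨N, ⟨hNc, hNp, mem_of_mem_nhds hN⟩, hw, hNU⟩
  · rintro a b c - - - ⟨C, hC, hbC, hCU⟩ ⟨D, hD, hcD, hDU⟩
    exact ⟨C ∪ D, union_mem_continuaThrough hC hbC hD, .inr hcD, union_subset hCU hDU⟩
  · rintro a b - - ⟨C, hC, hbC, hCU⟩
    exact ⟨C, ⟨hC.1, hC.2.1, hbC⟩, hC.2.2, hCU⟩

lemma exists_mem_continuaThrough_separating [T3Space X] [ConnectedSpace X]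
    [LocallyConnectedSpace X] (x : X) (hyz : y ≠ z) :
    ∃ C ∈ continuaThrough x, (y ∈ C ∧ z ∉ C) ∨ (z ∈ C ∧ y ∉ C) := by
  rcases eq_or_ne x z with rfl | hxz
  · exact ⟨{x}, ⟨isClosed_singleton, isPreconnected_singleton, rfl⟩, .inr ⟨rfl, hyz⟩⟩
  set W := connectedComponentIn {z}ᶜ x
  have hWo : IsOpen W := isOpen_compl_singleton.connectedComponentIn
  have hWc : IsPreconnected W := isPreconnected_connectedComponentIn
  have hxW : x ∈ W := mem_connectedComponentIn hxz
  have hWz : W ⊆ {z}ᶜ := connectedComponentIn_subset _ _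
  by_cases hyW : y ∈ W
  · obtain ⟨C, hC, hyC, hCW⟩ := exists_mem_continuaThrough_subset hWo hWc hxW hyW
    exact ⟨C, hC, .inl ⟨hyC, fun hz => hWz (hCW hz) rfl⟩⟩
  · have hclosure : closure W \ {z} ⊆ W := by
      refine IsPreconnected.subset_connectedComponentIn ?_ ⟨subset_closure hxW, hxz⟩
        (sdiff_subset_compl _ _)
      exact hWc.subset_closure (fun w hw => ⟨subset_closure hw, hWz hw⟩) sdiff_subset
    have hzW : z ∈ closure W := by
      by_contra hz
      have hWcl : IsClosed W :=
        isClosed_of_closure_subset fun w hw => hclosure ⟨hw, fun hwz => hz (hwz ▸ hw)⟩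
      have huniv := IsClopen.eq_univ ⟨hWcl, hWo⟩ ⟨x, hxW⟩
      exact hWz (huniv ▸ mem_univ z) rfl
    exact ⟨closure W, ⟨isClosed_closure, hWc.closure, subset_closure hxW⟩,
      .inr ⟨hzW, fun hy => hyW (hclosure ⟨hy, hyz⟩)⟩⟩

lemma left_mem_continuumHull (x z : X) : x ∈ continuumHull x z := fun _ hC => hC.1.2.2

lemma right_mem_continuumHull (x z : X) : z ∈ continuumHull x z := fun _ hC => hC.2

lemma continuumHull_subset (hC : C ∈ continuaThrough x) (hz : z ∈ C) : continuumHull x z ⊆ C :=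
  sInter_subset_of_mem ⟨hC, hz⟩

lemma continuumHull_self [T1Space X] (x : X) : continuumHull x x = {x} :=
  (continuumHull_subset ⟨isClosed_singleton, isPreconnected_singleton, rfl⟩ rfl).antisymm
    (singleton_subset_iff.2 (right_mem_continuumHull x x))

lemma continuumHull_subset_union (hN : N ∈ continuaThrough y) (hz : z ∈ N) :
    continuumHull x z ⊆ continuumHull x y ∪ N := by
  intro w hw
  refine or_iff_not_imp_right.2 fun hwN C hC => ?_
  have hCN := continuumHull_subset (union_mem_continuaThrough hC.1 hC.2 hN) (.inr hz)
  exact (hCN hw).resolve_right hwN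

end TopologicalSpace

lemma continuous_infDist_continuumHull [PseudoMetricSpace X] [LocallyConnectedSpace X] (x q : X) :
    Continuous fun z => infDist q (continuumHull x z) := by
  refine Metric.continuous_iff'.2 fun z ε hε => ?_
  obtain ⟨N, hN, hNc, hNp, hNz⟩ := exists_isClosed_isPreconnected_mem_nhds_subset
    (ball_mem_nhds z (half_pos (half_pos hε)))
  have hle : ∀ v ∈ N, ∀ w ∈ N,
      infDist q (continuumHull x v) - ε / 2 ≤ infDist q (continuumHull x w) := by
    intro v hv w hw
    rw [le_infDist ⟨w, right_mem_continuumHull x w⟩]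
    intro u hu
    rcases continuumHull_subset_union ⟨hNc, hNp, hv⟩ hw hu with h | h
    · linarith [infDist_le_dist_of_mem (x := q) h]
    · linarith [infDist_le_dist_of_mem (x := q) (right_mem_continuumHull x v),
        dist_triangle q u v, dist_triangle_right u v z, mem_ball.1 (hNz h), mem_ball.1 (hNz hv)]
  filter_upwards [hN] with w hw
  rw [Real.dist_eq, abs_lt]
  constructor <;> linarith [hle w hw z (mem_of_mem_nhds hN), hle z (mem_of_mem_nhds hN) w hw]

/-- The height of `z` above `x`, a measure of the size of `continuumHull x z`: a weighted sum of the
amounts by which enlarging `{x}` to this hull brings it closer to the points `q n`. -/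
noncomputable def continuumHeight [PseudoMetricSpace X] (q : ℕ → X) (x z : X) : ℝ :=
  ∑' n, (1 / 2 : ℝ) ^ n * (dist (q n) x - infDist (q n) (continuumHull x z))

section ContinuumHeight

variable [PseudoMetricSpace X] (q : ℕ → X) (x : X)

lemma infDist_continuumHull_le (n : ℕ) (z : X) :
    infDist (q n) (continuumHull x z) ≤ dist (q n) x :=
  infDist_le_dist_of_mem (left_mem_continuumHull x z)

lemma continuumHeight_nonneg (z : X) : 0 ≤ continuumHeight q x z :=
  tsum_nonneg fun n =>
    mul_nonneg (by positivity) (sub_nonneg.2 (infDist_continuumHull_le q x n z))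

variable [BoundedSpace X]

lemma norm_continuumHeight_summand_le (n : ℕ) (z : X) :
    ‖(1 / 2 : ℝ) ^ n * (dist (q n) x - infDist (q n) (continuumHull x z))‖ ≤
      (1 / 2) ^ n * diam (univ : Set X) := by
  rw [norm_mul, Real.norm_of_nonneg (by positivity : (0 : ℝ) ≤ (1 / 2) ^ n),
    Real.norm_of_nonneg (sub_nonneg.2 (infDist_continuumHull_le q x n z))]
  gcongr
  linarith [dist_le_diam_of_mem (Bornology.IsBounded.all univ) (mem_univ (q n)) (mem_univ x),
    infDist_nonneg (x := q n) (s := continuumHull x z)]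

lemma continuous_continuumHeight [LocallyConnectedSpace X] : Continuous (continuumHeight q x) :=
  continuous_tsum
    (fun n => continuous_const.mul
      (continuous_const.sub (continuous_infDist_continuumHull x (q n))))
    (summable_geometric_two.mul_right _) (norm_continuumHeight_summand_le q x)

variable {q x}

lemma continuumHeight_lt_continuumHeight (hq : DenseRange q) {y z : X} {C : Set X}
    (hC : IsClosed C) (hyC : continuumHull x y ⊆ C) (hCz : C ⊆ continuumHull x z) (hz : z ∉ C) :
    continuumHeight q x y < continuumHeight q x z := by
  have hsummable (w : X) := Summable.of_norm_bounded (summable_geometric_two.mul_right _)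
    (norm_continuumHeight_summand_le q x · w)
  have hne : C.Nonempty := ⟨y, hyC (right_mem_continuumHull x y)⟩
  have hpos := (hC.notMem_iff_infDist_pos hne).1 hz
  obtain ⟨_, hn, n, rfl⟩ := hq.inter_open_nonempty (ball z (infDist z C / 2)) isOpen_ball
    ⟨z, mem_ball_self (half_pos hpos)⟩
  refine Summable.tsum_lt_tsum (i := n) (fun m => ?_) ?_ (hsummable y) (hsummable z)
  · gcongr
    exact infDist_le_infDist_of_subset (hyC.trans hCz) ⟨y, right_mem_continuumHull x y⟩
  · gcongr
    calc infDist (q n) (continuumHull x z)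
      _ ≤ dist (q n) z := infDist_le_dist_of_mem (right_mem_continuumHull x z)
      _ < infDist (q n) C := by
        have hdist := infDist_le_infDist_add_dist (x := z) (y := q n) (s := C)
        rw [dist_comm z] at hdist
        linarith [mem_ball.1 hn]
      _ ≤ infDist (q n) (continuumHull x y) :=
        infDist_le_infDist_of_subset hyC ⟨y, right_mem_continuumHull x y⟩

end ContinuumHeight

theorem exists_continuous_injective_of_isChain_continuaThrough [MetricSpace X] [BoundedSpace X]
    [TopologicalSpace.SeparableSpace X] [ConnectedSpace X] [LocallyConnectedSpace X] {x : X}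
    (hx : IsChain (· ⊆ ·) (continuaThrough x)) :
    ∃ h : X → ℝ, Continuous h ∧ Function.Injective h ∧ h x = 0 ∧ ∀ z, 0 ≤ h z := by
  let q := TopologicalSpace.denseSeq X
  have hlt : ∀ C ∈ continuaThrough x, ∀ y ∈ C, ∀ z ∉ C,
      continuumHeight q x y < continuumHeight q x z := by
    intro C hC y hy z hz
    refine continuumHeight_lt_continuumHeight (TopologicalSpace.denseRange_denseSeq X) hC.1
      (continuumHull_subset hC hy) (subset_sInter fun D hD => ?_) hz
    exact (hx.total hC hD.1).resolve_right fun hDC => hz (hDC hD.2)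
  refine ⟨continuumHeight q x, continuous_continuumHeight q x, fun y z hyz => ?_, ?_,
    continuumHeight_nonneg q x⟩
  · by_contra hne
    obtain ⟨C, hC, ⟨hy, hz⟩ | ⟨hz, hy⟩⟩ := exists_mem_continuaThrough_separating x hne
    · exact (hlt C hC y hy z hz).ne hyz
    · exact (hlt C hC z hz y hy).ne' hyz
  · simp [continuumHeight, continuumHull_self]

end Continua

section Frontiers

variable {X : Type*} [TopologicalSpace X]

lemma isPreconnected_inter_of_subsingleton_inter_frontier {N A : Set X} (hN : IsPreconnected N)
    (hA : IsClosed A) (hNA : (N ∩ frontier A).Subsingleton) : IsPreconnected (N ∩ A) := by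
  rw [isPreconnected_iff_subset_of_disjoint_closed] at hN ⊢
  intro u v hu hv huv hd
  wlog h : N ∩ frontier A ⊆ u generalizing u v
  · refine (this v u hv hu (union_comm u v ▸ huv) (inter_comm u v ▸ hd) ?_).symm
    obtain ⟨z, hz, hzu⟩ := not_subset.1 h
    have hzv : z ∈ v := (huv ⟨hz.1, hA.frontier_subset hz.2⟩).resolve_left hzu
    exact fun w hw => hNA hz hw ▸ hzv
  -- The half of `N ∩ A` that holds the frontier point absorbs `N \ A`.
  have hN := hN (u ∩ A ∪ (interior A)ᶜ) (v ∩ A)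
    ((hu.inter hA).union isOpen_interior.isClosed_compl) (hv.inter hA)
  have hint : interior A ⊆ A := interior_subset
  have huA : ∀ w ∈ N, w ∈ A → w ∉ interior A → w ∈ u :=
    fun w hwN hwA hwi => h ⟨hwN, hA.frontier_eq ▸ ⟨hwA, hwi⟩⟩
  refine (hN ?_ ?_).imp (fun hNu w hw => ?_) (fun hNv w hw => (hNv hw.1).1)
  · intro w hw
    by_cases hwi : w ∈ interior A
    · exact (huv ⟨hw, hint hwi⟩).imp (fun hwu => .inl ⟨hwu, hint hwi⟩) fun hwv => ⟨hwv, hint hwi⟩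
    · exact .inl (.inr hwi)
  · refine eq_empty_of_forall_notMem fun w hw => ?_
    have hwu : w ∈ u := hw.2.1.elim And.left (huA w hw.1 hw.2.2.2)
    exact (hd.subset ⟨⟨hw.1, hw.2.2.2⟩, hwu, hw.2.2.1⟩ : w ∈ ∅)
  · exact (hNu hw.1).elim And.left (huA w hw.1 hw.2)

lemma locallyConnectedSpace_of_finite_frontier [T3Space X] [LocallyConnectedSpace X] {A : Set X}
    (hA : IsClosed A) (hfin : (frontier A).Finite) : LocallyConnectedSpace A := by
  rw [locallyConnectedSpace_iff_connected_subsets]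
  rintro ⟨x, hx⟩ U hU
  obtain ⟨V, hV, hVU⟩ := (mem_nhds_subtype A ⟨x, hx⟩ U).1 hU
  have hfr : (frontier A \ {x})ᶜ ∈ 𝓝 x :=
    (hfin.subset sdiff_subset).isClosed.isOpen_compl.mem_nhds fun hx => hx.2 rfl
  obtain ⟨N, hN, -, hNp, hNV⟩ :=
    exists_isClosed_isPreconnected_mem_nhds_subset (inter_mem hV hfr)
  have hNx : N ∩ frontier A ⊆ {x} :=
    fun w hw => by_contra fun hwx => (hNV hw.1).2 ⟨hw.2, hwx⟩
  refine ⟨Subtype.val ⁻¹' N, continuousAt_subtype_val hN, ?_,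
    (preimage_mono (hNV.trans inter_subset_left)).trans hVU⟩
  rw [← Topology.IsInducing.subtypeVal.isPreconnected_image, image_preimage_eq_inter_range,
    Subtype.range_coe]
  exact isPreconnected_inter_of_subsingleton_inter_frontier hNp hA
    (subsingleton_singleton.anti hNx)

lemma infinite_sdiff_of_isPreconnected [T1Space X] {C D : Set X} (hC : IsPreconnected C)
    (hD : IsClosed D) (hCD : (C ∩ D).Nonempty) (hsub : ¬ C ⊆ D) : (C \ D).Infinite := by
  intro hfin
  rcases isPreconnected_iff_subset_of_disjoint_closed.1 hC D (C \ D) hD hfin.isClosed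
    (fun w hw => or_iff_not_imp_left.2 fun hwD => ⟨hw, hwD⟩) (by simp) with h | h
  · exact hsub h
  · exact (h hCD.some_mem.1).2 hCD.some_mem.2

end Frontiers

section RealFunctions

variable {X : Type*}

lemma injective_piecewise_neg {A B : Set X} [DecidablePred (· ∈ A)] {f g : X → ℝ}
    {a : X} (hAB : A ∪ B = univ) (ha : a ∈ A) (hb : a ∈ B) (hf : InjOn f A) (hg : InjOn g B)
    (hga : g a = 0) (hf₀ : ∀ z ∈ A, 0 ≤ f z) (hg₀ : ∀ z ∈ B, 0 ≤ g z) :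
    Function.Injective (A.piecewise f (-g)) := by
  have hB : Aᶜ ⊆ B := compl_subset_iff_union.2 hAB
  refine (injective_piecewise_iff A).2
    ⟨hf, (neg_injective.comp_injOn hg).mono hB, fun x hx y hy hxy => hy ?_⟩
  have hgy : g y = g a := by
    have hxy : f x = -g y := hxy
    linarith [hf₀ x hx, hg₀ y (hB hy)]
  rwa [hg (hB hy) hb hgy]

variable [TopologicalSpace X]

lemma image_eq_Icc_of_isPreconnected_sdiff_singleton {s : Set X} {f : X → ℝ} {a b : X}
    (hs : IsPreconnected s) (hsb : IsPreconnected (s \ {b})) (hf : ContinuousOn f s)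
    (hinj : InjOn f s) (ha : a ∈ s) (hb : b ∈ s) (hab : a ≠ b) (hmin : ∀ z ∈ s, f a ≤ f z) :
    f '' s = Icc (f a) (f b) := by
  refine Subset.antisymm ?_ (hs.intermediate_value ha hb hf)
  rintro _ ⟨z, hz, rfl⟩
  refine ⟨hmin z hz, ?_⟩
  by_contra! hbz
  have hzb : z ≠ b := fun hzb => hbz.ne (congrArg f hzb).symm
  obtain ⟨w, hw, hwb⟩ := hsb.intermediate_value ⟨ha, hab⟩ ⟨hz, hzb⟩ (hf.mono sdiff_subset)
    ⟨hmin b hb, hbz.le⟩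
  exact hw.2 (hinj hw.1 hb hwb)

lemma exists_nonempty_homeomorph_Icc [CompactSpace X] [ConnectedSpace X] {f : X → ℝ}
    (hf : Continuous f) (hinj : Function.Injective f) :
    ∃ a b : ℝ, a ≤ b ∧ Nonempty (X ≃ₜ Icc a b) := by
  have hrange := eq_Icc_of_connected_compact (isConnected_range hf) (isCompact_range hf)
  exact ⟨_, _, nonempty_Icc.1 (hrange ▸ range_nonempty f),
    ⟨(hf.isClosedEmbedding hinj).isEmbedding.toHomeomorph.trans (Homeomorph.setCongr hrange)⟩⟩

lemma nonempty_homeomorph_addCircle_of_range [CompactSpace X] {φ : X → ℝ} {a p : ℝ}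
    [Fact (0 < p)] (hφ : Function.Injective φ) (hrange : range φ = Ioc a (a + p))
    (hc : Continuous fun x => (φ x : AddCircle p)) : Nonempty (X ≃ₜ AddCircle p) := by
  have hmem (x : X) : φ x ∈ Ioc a (a + p) := hrange ▸ mem_range_self x
  have hinj : Function.Injective fun x => (φ x : AddCircle p) := fun x y hxy =>
    hφ ((AddCircle.coe_eq_coe_iff_of_mem_Ioc (hmem x) (hmem y)).1 hxy)
  have hsurj : Function.Surjective fun x => (φ x : AddCircle p) := by
    rw [← range_eq_univ, ← AddCircle.coe_image_Ioc_eq p a, ← hrange, ← range_comp]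
    rfl
  exact ⟨Continuous.homeoOfEquivCompactToT2 (f := Equiv.ofBijective _ ⟨hinj, hsurj⟩) hc⟩

end RealFunctions

section Separations

variable {X : Type*} [TopologicalSpace X] {A B F : Set X}

/-- `F` separates the space into the closed sides `A` and `B`, both of which contain `F`. -/
structure IsSeparation (A B F : Set X) : Prop where
  isClosed_left : IsClosed A
  isClosed_right : IsClosed B
  union_eq : A ∪ B = univ
  inter_eq : A ∩ B = F
  nonempty_left : (A \ B).Nonempty
  nonempty_right : (B \ A).Nonempty

lemma exists_isSeparation (hF : IsClosed F) (h : ¬ IsPreconnected Fᶜ) :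
    ∃ A B, IsSeparation A B F := by
  simp only [isPreconnected_iff_subset_of_disjoint, not_forall, not_or] at h
  obtain ⟨u, v, hu, hv, huv, hd, hsu, hsv⟩ := h
  obtain ⟨x, hxF, hxu⟩ := not_subset.1 hsu
  obtain ⟨y, hyF, hyv⟩ := not_subset.1 hsv
  have hxv : x ∈ v := (huv hxF).resolve_left hxu
  have hyu : y ∈ u := (huv hyF).resolve_right hyv
  have hd (w : X) (hw : w ∉ F) (hwu : w ∈ u) (hwv : w ∈ v) : False :=
    hd.subset ⟨hw, hwu, hwv⟩
  have huv (w : X) (hw : w ∉ F) : w ∈ u ∨ w ∈ v := huv hw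
  refine ⟨(u \ F)ᶜ, (v \ F)ᶜ, (hu.sdiff hF).isClosed_compl, (hv.sdiff hF).isClosed_compl,
    ?_, ?_, ⟨x, ?_⟩, ⟨y, ?_⟩⟩ <;> grind

namespace IsSeparation

lemma symm (h : IsSeparation A B F) : IsSeparation B A F :=
  ⟨h.isClosed_right, h.isClosed_left, union_comm A B ▸ h.union_eq, inter_comm A B ▸ h.inter_eq,
    h.nonempty_right, h.nonempty_left⟩

lemma subset_left (h : IsSeparation A B F) : F ⊆ A := h.inter_eq ▸ inter_subset_left

lemma compl_left (h : IsSeparation A B F) : Aᶜ = B \ F := by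
  ext x
  have hx : x ∈ A ∪ B := h.union_eq ▸ mem_univ x
  rw [← h.inter_eq]
  grind

lemma frontier_left_subset (h : IsSeparation A B F) : frontier A ⊆ F := by
  rw [h.isClosed_left.frontier_eq, ← h.inter_eq]
  refine fun x hx => ⟨hx.1, by_contra fun hxB => hx.2 ?_⟩
  exact mem_interior.2 ⟨Bᶜ, compl_subset_iff_union.2 h.symm.union_eq,
    h.isClosed_right.isOpen_compl, hxB⟩

lemma isPreconnected_left (h : IsSeparation A B F) {N : Set X} (hN : IsPreconnected N)
    (hNF : (N ∩ F).Subsingleton) : IsPreconnected (N ∩ A) :=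
  isPreconnected_inter_of_subsingleton_inter_frontier hN h.isClosed_left
    (hNF.anti (inter_subset_inter_right N h.frontier_left_subset))

lemma isPreconnected_left_sdiff_singleton {a b : X}
    (h : IsSeparation A B {a, b}) (hb : IsPreconnected ({b}ᶜ : Set X)) :
    IsPreconnected (A \ {b}) := by
  have hba : {b}ᶜ ∩ {a, b} ⊆ ({a} : Set X) := by grind
  rw [sdiff_eq, inter_comm]
  exact h.isPreconnected_left hb (subsingleton_singleton.anti hba)

lemma isPreconnected_left_of_pair {a b : X} (h : IsSeparation A B {a, b})
    (hab : a ≠ b) (ha : IsPreconnected ({a}ᶜ : Set X))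
    (hb : IsPreconnected ({b}ᶜ : Set X)) : IsPreconnected A := by
  have hAa := (pair_comm a b ▸ h).isPreconnected_left_sdiff_singleton ha
  have hAb := h.isPreconnected_left_sdiff_singleton hb
  obtain ⟨u, huA, huB⟩ := h.nonempty_left
  have hua : u ≠ a := fun hu => huB (hu ▸ h.symm.subset_left (.inl rfl))
  have hub : u ≠ b := fun hu => huB (hu ▸ h.symm.subset_left (.inr rfl))
  have hunion : A \ {a} ∪ A \ {b} = A := by grind
  exact hunion ▸ hAa.union u ⟨huA, hua⟩ ⟨huA, hub⟩ hAb

lemma continuous_piecewise {Y : Type*} [TopologicalSpace Y] [DecidablePred (· ∈ A)]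
    (h : IsSeparation A B F) {f g : X → Y} (hf : ContinuousOn f A) (hg : ContinuousOn g B)
    (hfg : EqOn f g F) : Continuous (A.piecewise f g) := by
  refine _root_.continuous_piecewise (fun x hx => hfg (h.frontier_left_subset hx))
    (h.isClosed_left.closure_eq.symm ▸ hf) (hg.mono ?_)
  exact closure_minimal (h.compl_left ▸ sdiff_subset) h.isClosed_right

lemma subset_or_subset [T1Space X] [CompactSpace X] [IsEmpty (WeakTriod X)]
    (h : IsSeparation A B F) (hF : F.Finite) (hB : IsPreconnected B) {a : X} (ha : a ∈ F)
    {C D : Set X} (hC : C ∈ continuaThrough a) (hD : D ∈ continuaThrough a)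
    (hCA : C ⊆ A) (hDA : D ⊆ A) : C ⊆ D ∨ D ⊆ C := by
  by_contra! hcon
  have hfoot {C D : Set X} (hC : C ∈ continuaThrough a) (hD : D ∈ continuaThrough a)
      (hCD : ¬ C ⊆ D) : ((C \ D) \ F).Nonempty :=
    ((infinite_sdiff_of_isPreconnected hC.2.1 hD.1 ⟨a, hC.2.2, hD.2.2⟩ hCD).sdiff hF).nonempty
  obtain ⟨e₀, ⟨he₀C, he₀D⟩, he₀F⟩ := hfoot hC hD hcon.1
  obtain ⟨e₁, ⟨he₁D, he₁C⟩, he₁F⟩ := hfoot hD hC hcon.2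
  obtain ⟨e₂, he₂B, he₂A⟩ := h.nonempty_right
  have hF' := h.inter_eq
  refine IsEmpty.false (α := WeakTriod X) ⟨a, ![e₀, e₁, e₂], ![C, D, B], ?_, ?_, ?_, ?_⟩
  · simp [Fin.forall_fin_succ, hC.1.isCompact, hD.1.isCompact, h.isClosed_right.isCompact]
  · simp [Fin.forall_fin_succ, hC.2.1, hD.2.1, hB]
  · simp [Fin.forall_fin_succ, hC.2.2, hD.2.2, h.symm.subset_left ha]
  · intro j k
    fin_cases j <;> fin_cases k <;> simp <;> grind

end IsSeparation

end Separations

section Classification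

variable {X : Type*} [MetricSpace X] [CompactSpace X]

namespace IsSeparation

variable {A B F : Set X} {a b x : X} [LocallyConnectedSpace X] [IsEmpty (WeakTriod X)]

lemma exists_height (h : IsSeparation A B F) (hF : F.Finite) (hA : IsPreconnected A)
    (hB : IsPreconnected B) (ha : a ∈ F) :
    ∃ f : X → ℝ, ContinuousOn f A ∧ InjOn f A ∧ f a = 0 ∧ ∀ z ∈ A, 0 ≤ f z := by
  have haA := h.subset_left ha
  have : CompactSpace A := isCompact_iff_compactSpace.1 h.isClosed_left.isCompact
  have : ConnectedSpace A := isConnected_iff_connectedSpace.1 ⟨⟨a, haA⟩, hA⟩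
  have : LocallyConnectedSpace A := locallyConnectedSpace_of_finite_frontier h.isClosed_left
    (hF.subset h.frontier_left_subset)
  have himage {C : Set A} (hC : C ∈ continuaThrough ⟨a, haA⟩) :
      Subtype.val '' C ∈ continuaThrough a :=
    image_mem_continuaThrough continuous_subtype_val
      h.isClosed_left.isClosedEmbedding_subtypeVal.isClosedMap hC
  have hchain : IsChain (· ⊆ ·) (continuaThrough (⟨a, haA⟩ : A)) := by
    intro C hC D hD _
    simpa only [image_subset_image_iff Subtype.val_injective] using
      h.subset_or_subset hF hB ha (himage hC) (himage hD) (Subtype.coe_image_subset A C)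
        (Subtype.coe_image_subset A D)
  obtain ⟨f, hf, hinj, hfa, hf₀⟩ := exists_continuous_injective_of_isChain_continuaThrough hchain
  have hext (z : A) : Function.extend Subtype.val f 0 (z : X) = f z :=
    Subtype.val_injective.extend_apply f 0 z
  refine ⟨Function.extend Subtype.val f 0, ?_, ?_, (hext ⟨a, haA⟩).trans hfa,
    fun z hz => (hf₀ ⟨z, hz⟩).trans_eq (hext ⟨z, hz⟩).symm⟩
  · exact continuousOn_iff_continuous_domRestrict.2 (hf.congr fun z => (hext z).symm)
  · exact injOn_iff_injective.2 fun y z hyz => hinj (by simpa only [domRestrict, hext] using hyz)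

lemma exists_continuous_injective [ConnectedSpace X] (h : IsSeparation A B {x}) :
    ∃ f : X → ℝ, Continuous f ∧ Function.Injective f := by
  classical
  have hA : IsPreconnected A := by
    simpa using h.isPreconnected_left isPreconnected_univ (by simp)
  have hB : IsPreconnected B := by
    simpa using h.symm.isPreconnected_left isPreconnected_univ (by simp)
  obtain ⟨f, hf, hfi, hfx, hf₀⟩ := h.exists_height (finite_singleton x) hA hB rfl
  obtain ⟨g, hg, hgi, hgx, hg₀⟩ := h.symm.exists_height (finite_singleton x) hB hA rfl
  refine ⟨A.piecewise f (-g), h.continuous_piecewise hf hg.neg ?_, ?_⟩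
  · simp [hfx, hgx]
  · exact injective_piecewise_neg h.union_eq (h.subset_left rfl) (h.symm.subset_left rfl) hfi hgi
      hgx hf₀ hg₀

lemma exists_height_of_pair (h : IsSeparation A B {a, b}) (hab : a ≠ b)
    (ha : IsPreconnected ({a}ᶜ : Set X)) (hb : IsPreconnected ({b}ᶜ : Set X)) :
    ∃ f : X → ℝ, ContinuousOn f A ∧ InjOn f A ∧ f a = 0 ∧ 0 < f b ∧ f '' A = Icc 0 (f b) := by
  have hA := h.isPreconnected_left_of_pair hab ha hb
  have hB := h.symm.isPreconnected_left_of_pair hab ha hb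
  have haA : a ∈ A := h.subset_left (.inl rfl)
  have hbA : b ∈ A := h.subset_left (.inr rfl)
  obtain ⟨f, hf, hinj, hfa, hf₀⟩ := h.exists_height (toFinite _) hA hB (.inl rfl)
  refine ⟨f, hf, hinj, hfa, (hf₀ b hbA).lt_of_ne fun h0 => hab (hinj haA hbA (hfa.trans h0)), ?_⟩
  exact hfa ▸ image_eq_Icc_of_isPreconnected_sdiff_singleton hA
    (h.isPreconnected_left_sdiff_singleton hb) hf hinj haA hbA hab (hfa ▸ hf₀)

lemma nonempty_homeomorph_addCircle (h : IsSeparation A B {a, b}) (hab : a ≠ b)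
    (ha : IsPreconnected ({a}ᶜ : Set X)) (hb : IsPreconnected ({b}ᶜ : Set X)) :
    Nonempty (X ≃ₜ AddCircle (1 : ℝ)) := by
  classical
  obtain ⟨f, hf, hfi, hfa, hfb, hfA⟩ := h.exists_height_of_pair hab ha hb
  obtain ⟨g, hg, hgi, hga, hgb, hgB⟩ := h.symm.exists_height_of_pair hab ha hb
  have hinj : Function.Injective (A.piecewise f (-g)) :=
    injective_piecewise_neg h.union_eq (h.subset_left (.inl rfl)) (h.symm.subset_left (.inl rfl))
      hfi hgi hga (fun z hz => (hfA.subset (mem_image_of_mem f hz)).1)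
      fun z hz => (hgB.subset (mem_image_of_mem g hz)).1
  have hgA : (-g) '' Aᶜ = Ioo (-g b) 0 := by
    have hg' : g '' Aᶜ = Ioo 0 (g b) := by
      rw [h.compl_left, hgi.image_sdiff_subset h.symm.subset_left, image_pair, hgB, hga,
        Icc_sdiff_both]
    rw [← neg_zero, ← image_neg_Ioo, ← hg', image_image]
    rfl
  have hrange : range (A.piecewise f (-g)) = Ioc (-g b) (-g b + (f b + g b)) := by
    rw [range_piecewise, hfA, hgA, union_comm, Ioo_union_Icc_eq_Ioc (neg_neg_of_pos hgb) hfb.le]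
    ring_nf
  have : Fact (0 < f b + g b) := ⟨add_pos hfb hgb⟩
  have hcoe : Continuous ((↑) : ℝ → AddCircle (f b + g b)) := AddCircle.continuous_mk' _
  have hends : ∀ z ∈ ({a, b} : Set X), (f z : AddCircle (f b + g b)) = (-g z : ℝ) := by
    rintro z (rfl | rfl)
    · rw [hfa, hga, neg_zero]
    · rw [← AddCircle.coe_add_period _ (-g z), neg_add_eq_sub, add_sub_cancel_right]
  have hc : Continuous fun x => (A.piecewise f (-g) x : AddCircle (f b + g b)) := by
    refine (h.continuous_piecewise (hcoe.comp_continuousOn hf) (hcoe.comp_continuousOn hg.neg)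
      hends).congr fun x => ?_
    exact (A.apply_piecewise f (-g) fun _ => ((↑) : ℝ → AddCircle (f b + g b))).symm
  obtain ⟨e⟩ := nonempty_homeomorph_addCircle_of_range hinj hrange hc
  exact ⟨e.trans (AddCircle.homeomorphAddCircle (f b + g b) 1 (add_pos hfb hgb).ne' one_ne_zero)⟩

end IsSeparation

lemma subsingleton_of_isPreconnected_compl_pair [PreconnectedSpace X] [LocallyConnectedSpace X]
    [IsEmpty (WeakTriod X)] (h : ∀ a b : X, IsPreconnected ({a, b}ᶜ : Set X)) :
    Subsingleton X := by
  by_contra hX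
  have : Nontrivial X := not_subsingleton_iff_nontrivial.1 hX
  have : Infinite X := PreconnectedSpace.infinite
  let p := Infinite.natEmbedding X
  have hlegs (j : Fin 3) : ∃ C ∈ continuaThrough (p 3), p j ∈ C ∧
      C ⊆ {p ((j + 1 : Fin 3) : ℕ), p ((j + 2 : Fin 3) : ℕ)}ᶜ := by
    refine exists_mem_continuaThrough_subset (toFinite _).isClosed.isOpen_compl (h _ _) ?_ ?_ <;>
      fin_cases j <;> simp
  choose C hC hpC hCp using hlegs
  refine IsEmpty.false (α := WeakTriod X) ⟨p 3, fun j => p j, C, fun j => (hC j).1.isCompact,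
    fun j => (hC j).2.1, fun j => (hC j).2.2, fun {j k} => ⟨fun hjk => ?_, fun hjk => hjk ▸ hpC j⟩⟩
  have hne := hCp k hjk
  fin_cases j <;> fin_cases k <;> simp at hne ⊢

theorem nonempty_homeomorph_Icc_or_addCircle [ConnectedSpace X] [LocallyConnectedSpace X]
    [IsEmpty (WeakTriod X)] :
    (∃ a b : ℝ, a ≤ b ∧ Nonempty (X ≃ₜ Icc a b)) ∨ Nonempty (X ≃ₜ AddCircle (1 : ℝ)) := by
  by_cases hcut : ∃ x : X, ¬ IsPreconnected ({x}ᶜ : Set X)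
  · obtain ⟨x, hx⟩ := hcut
    obtain ⟨A, B, h⟩ := exists_isSeparation isClosed_singleton hx
    obtain ⟨f, hf, hinj⟩ := h.exists_continuous_injective
    exact .inl (exists_nonempty_homeomorph_Icc hf hinj)
  push Not at hcut
  by_cases hpair : ∃ a b : X, ¬ IsPreconnected ({a, b}ᶜ : Set X)
  · obtain ⟨a, b, hab⟩ := hpair
    obtain ⟨A, B, h⟩ := exists_isSeparation (toFinite _).isClosed hab
    have hne : a ≠ b := by
      rintro rfl
      rw [pair_eq_singleton] at hab
      exact hab (hcut a)
    exact .inr (h.nonempty_homeomorph_addCircle hne (hcut a) (hcut b))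
  push Not at hpair
  have := subsingleton_of_isPreconnected_compl_pair hpair
  exact .inl (exists_nonempty_homeomorph_Icc (f := 0) continuous_zero
    (Function.injective_of_subsingleton _))

end Classification

section Plane

variable {K : Set (ℝ × ℝ)}

lemma isJordanArc_of_homeomorph {a b : ℝ} (hab : a ≤ b) (e : K ≃ₜ Icc a b) : IsJordanArc K := by
  have hext (t : Icc a b) : IccExtend hab (fun s => (e.symm s : ℝ × ℝ)) t = e.symm t :=
    IccExtend_val hab _ t
  refine ⟨a, b, IccExtend hab fun s => (e.symm s : ℝ × ℝ), hab, ?_, ?_, ?_⟩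
  · exact (continuous_subtype_val.comp e.symm.continuous).Icc_extend'.continuousOn
  · exact injOn_iff_injective.2 fun s t hst =>
      e.symm.injective (Subtype.ext ((hext s).symm.trans (hst.trans (hext t))))
  · rw [image_eq_range, funext hext]
    exact (e.symm.surjective.range_comp Subtype.val).trans Subtype.range_coe

lemma isJordanCurve_of_homeomorph (e : K ≃ₜ AddCircle (1 : ℝ)) : IsJordanCurve K :=
  ⟨fun t => e.symm t, continuous_subtype_val.comp e.symm.continuous,
    Subtype.val_injective.comp e.symm.injective,
    (e.symm.surjective.range_comp Subtype.val).trans Subtype.range_coe⟩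

lemma nonempty_weakTriod (hK : IsCompact K) (hc : IsConnected K) [LocallyConnectedSpace K]
    (hK' : ¬ (IsJordanArc K ∨ IsJordanCurve K)) : Nonempty (WeakTriod K) := by
  have : CompactSpace K := isCompact_iff_compactSpace.1 hK
  have : ConnectedSpace K := isConnected_iff_connectedSpace.1 hc
  by_contra hempty
  have := not_nonempty_iff.1 hempty
  rcases nonempty_homeomorph_Icc_or_addCircle (X := K) with ⟨a, b, hab, ⟨e⟩⟩ | ⟨⟨e⟩⟩
  · exact hK' (.inl (isJordanArc_of_homeomorph hab e))
  · exact hK' (.inr (isJordanCurve_of_homeomorph e))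

end Plane

/-- In any family of pairwise disjoint Peano continua in the plane, all but
countably many members are Jordan arcs or Jordan curves. -/
theorem peano_continua_ae_arcs_or_curves {ι : Type*} (K : ι → Set (ℝ × ℝ))
    (hcomp : ∀ i, IsCompact (K i)) (hconn : ∀ i, IsConnected (K i))
    (hlc : ∀ i, LocallyConnectedSpace (K i))
    (hdisj : Pairwise (Function.onFun Disjoint K)) :
    Set.Countable {i | ¬ (IsJordanArc (K i) ∨ IsJordanCurve (K i))} := by
  have htriod (i : {i | ¬ (IsJordanArc (K i) ∨ IsJordanCurve (K i))}) :
      Nonempty (WeakTriod (K i)) := nonempty_weakTriod (hcomp i) (hconn i) i.2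
  let T i := (htriod i).some
  let φ := Complex.equivRealProdCLM.symm
  have hφ (i : ι) : Continuous fun z : K i => φ z := φ.continuous.comp continuous_subtype_val
  have hφi (i : ι) : Function.Injective fun z : K i => φ z :=
    φ.injective.comp Subtype.val_injective
  refine WeakTriod.countable_of_pairwise_disjoint (fun i => (T i).map (hφ i) (hφi i)) ?_
  intro i j hij
  refine Disjoint.mono ((T i).carrier_map_subset_range _ _) ((T j).carrier_map_subset_range _ _) ?_
  simp only [range_comp' φ, Subtype.range_coe]
  exact (disjoint_image_iff φ.injective).2 (hdisj (Subtype.coe_injective.ne hij))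
end

section
/- There is no uncountable collection of pairwise disjoint triods in the plane ℝ². -/
/-- A triod in the plane: the union of three non-degenerate Jordan arcs having
a common endpoint (the junction point) but otherwise pairwise disjoint. -/
def IsTriod (T : Set (ℝ × ℝ)) : Prop :=
  ∃ (p : ℝ × ℝ) (f : Fin 3 → ℝ → ℝ × ℝ),
    (∀ i, ContinuousOn (f i) (Set.Icc (0 : ℝ) 1) ∧
      Set.InjOn (f i) (Set.Icc (0 : ℝ) 1) ∧ f i 0 = p) ∧
    (∀ i j, i ≠ j →
      (f i '' Set.Icc (0 : ℝ) 1) ∩ (f j '' Set.Icc (0 : ℝ) 1) = {p}) ∧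
    T = ⋃ i, f i '' Set.Icc (0 : ℝ) 1

/-!
Two paths in a closed disc joining interleaved pairs of boundary points must meet. A disc around
the junction point of a triod, small enough to miss the other ends of its legs, is left by each
leg, and the first exit points are three distinct points of the boundary circle; two rational
angles separate them. If disjoint triods had the same disc and the same separating angles, the
endpoints of a path through one junction would interleave with those of a path through the other.
As discs with rational radius and centre in a countable dense set suffice, a disjoint family of
triods injects into a countable set of parameters.
-/

open Set Metric Complex
open scoped Topology Real ComplexConjugate ComplexOrder

section ComplexLogarithm

variable {X : Type*} [TopologicalSpace X]

lemma exists_continuous_exp_eq [SimplyConnectedSpace X] [LocallyPathConnectedSpace X]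
    {f : X → ℂ} (hf : Continuous f) (hf₀ : ∀ x, f x ≠ 0) :
    ∃ L : X → ℂ, Continuous L ∧ ∀ x, exp (L x) = f x := by
  obtain ⟨a⟩ : Nonempty X := inferInstance
  obtain ⟨L, ⟨-, hL⟩, -⟩ := isCoveringMapOn_exp.existsUnique_continuousMap_lifts
    ⟨f, hf⟩ (exp_log (hf₀ a)) hf₀
  exact ⟨L, L.continuous, congrFun hL⟩

lemma sub_log_eq_sub_log [PreconnectedSpace X] {L f : X → ℂ} (hL : Continuous L)
    (hf : Continuous f) (hslit : ∀ x, f x ∈ slitPlane) {c : ℂ} (hexp : ∀ x, exp (L x) = c * f x)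
    (x y : X) : L x - log (f x) = L y - log (f y) := by
  have hconst (x : X) : exp (L x - log (f x)) = c := by
    have hfx := slitPlane_ne_zero (hslit x)
    rw [exp_sub, exp_log hfx, hexp, mul_div_cancel_right₀ _ hfx]
  exact isCoveringMap_exp.const_of_comp (hL.sub (hf.clog hslit))
    (fun x y => Subtype.ext ((hconst x).trans (hconst y).symm)) x y

end ComplexLogarithm

section ChordAngle

lemma one_sub_mem_slitPlane {z : ℂ} (hz : ‖z‖ ≤ 1) (hz₁ : z ≠ 1) : 1 - z ∈ slitPlane := by
  rw [mem_slitPlane_iff_not_le_zero, sub_nonpos]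
  intro hle
  have hnorm : (‖z‖ : ℂ) = z := norm_of_nonneg' (zero_le_one.trans hle)
  have hle' : 1 ≤ ‖z‖ := by
    rw [← hnorm] at hle
    exact_mod_cast hle
  exact hz₁ (by rw [← hnorm, le_antisymm hz hle', ofReal_one])

/-- The oriented angle at `w` from the direction of `0` to that of `z`, for `z` in the closed
disc centred at `0` whose boundary circle contains `w`. It is `0` when `z = w`. -/
noncomputable def chordAngle (w z : ℂ) : ℝ := arg (1 - z / w)

lemma chordAngle_comm {w z : ℂ} (hw : ‖w‖ = 1) (hz : ‖z‖ = 1) :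
    chordAngle w z = -chordAngle z w := by
  rcases eq_or_ne w z with rfl | hne
  · simp [chordAngle, show w ≠ 0 by rintro rfl; simp at hw]
  have hconj : 1 - z / w = conj (1 - w / z) := by
    rw [map_sub, map_one, map_div₀, ← inv_eq_conj hw, ← inv_eq_conj hz, inv_div_inv]
  have hslit : 1 - w / z ∈ slitPlane :=
    one_sub_mem_slitPlane (by simp [hw, hz]) fun h => hne (eq_of_div_eq_one h)
  rw [chordAngle, chordAngle, hconj, arg_conj, if_neg (mem_slitPlane_iff_arg.1 hslit).1]

lemma chordAngle_exp_mul_I {a b : ℝ} (hab : a < b) (hba : b < a + 2 * π) :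
    chordAngle (exp (a * I)) (exp (b * I)) = (b - a - π) / 2 := by
  set δ : ℝ := b - a with hδ
  have hsin : 0 < 2 * Real.sin (δ / 2) :=
    mul_pos two_pos (Real.sin_pos_of_pos_of_lt_pi (by linarith) (by linarith))
  have hpolar : 1 - exp (b * I) / exp (a * I) =
      (2 * Real.sin (δ / 2) : ℝ) * exp (((δ - π) / 2 : ℝ) * I) := by
    have hrot : exp (((δ - π) / 2 : ℝ) * I) = exp (δ / 2 * I) * -I := by
      rw [← exp_neg_pi_div_two_mul_I, ← exp_add]
      push_cast
      ring_nf
    have hsq : exp (b * I) / exp (a * I) = exp (δ / 2 * I) * exp (δ / 2 * I) := by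
      rw [← exp_sub, ← exp_add, hδ]
      push_cast
      ring_nf
    have hinv : exp (-(δ / 2) * I) * exp (δ / 2 * I) = 1 := by
      rw [← exp_add, ← add_mul, neg_add_cancel, zero_mul, exp_zero]
    rw [hrot, hsq]
    push_cast
    rw [two_sin]
    linear_combination (exp (-(δ / 2) * I) - exp (δ / 2 * I)) * exp (δ / 2 * I) * I_mul_I - hinv
  rw [chordAngle, hpolar, exp_mul_I, arg_mul_cos_add_sin_mul_I hsin]
  constructor <;> linarith

lemma im_sub_im_eq_chordAngle_sub {X : Type*} [TopologicalSpace X] [PreconnectedSpace X]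
    {L γ : X → ℂ} (hL : Continuous L) (hγ : Continuous γ) {w c : ℂ} (hw : ‖w‖ = 1)
    (hγ₁ : ∀ t, ‖γ t‖ ≤ 1) (hne : ∀ t, γ t ≠ w) (hexp : ∀ t, exp (L t) = c * (w - γ t))
    (s t : X) : (L t).im - (L s).im = chordAngle w (γ t) - chordAngle w (γ s) := by
  have hw₀ : w ≠ 0 := by rintro rfl; simp at hw
  have hslit (t : X) : 1 - γ t / w ∈ slitPlane :=
    one_sub_mem_slitPlane (by simpa [hw] using hγ₁ t) fun h => hne t (eq_of_div_eq_one h)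
  have hlog := sub_log_eq_sub_log hL (by fun_prop) hslit (c := c * w)
    (fun t => by rw [hexp, mul_assoc, mul_one_sub, mul_div_cancel₀ _ hw₀]) s t
  have him := congrArg im hlog
  simp only [sub_im, log_im] at him
  simp only [chordAngle]
  linarith

end ChordAngle

section Crossing

-- The difference `γ₁ s - γ₂ t` has a continuous logarithm on the whole parameter square, so its
-- argument varies by the same amount along both routes between opposite corners.
lemma chordAngle_sub_eq_of_disjoint {K₁ K₂ : Set ℂ} (h₁ : K₁ ⊆ closedBall 0 1)
    (h₂ : K₂ ⊆ closedBall 0 1) (hdisj : Disjoint K₁ K₂) {x x' y y' : ℂ} (hx : ‖x‖ = 1)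
    (hx' : ‖x'‖ = 1) (hy : ‖y‖ = 1) (hy' : ‖y'‖ = 1) (j₁ : JoinedIn K₁ x x')
    (j₂ : JoinedIn K₂ y y') :
    chordAngle y x' - chordAngle y x = chordAngle y' x' - chordAngle y' x := by
  obtain ⟨g₁, hg₁⟩ := j₁
  obtain ⟨g₂, hg₂⟩ := j₂
  set γ₁ : C(ℝ, ℂ) := g₁.extend
  set γ₂ : C(ℝ, ℂ) := g₂.extend
  have n₁ (s : ℝ) : ‖γ₁ s‖ ≤ 1 := mem_closedBall_zero_iff.1 (h₁ (hg₁ _))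
  have n₂ (t : ℝ) : ‖γ₂ t‖ ≤ 1 := mem_closedBall_zero_iff.1 (h₂ (hg₂ _))
  have hne (s t : ℝ) : γ₁ s ≠ γ₂ t := hdisj.ne_of_mem (hg₁ _) (hg₂ _)
  obtain ⟨L, hL, hexp⟩ := exists_continuous_exp_eq (f := fun q : ℝ × ℝ => γ₁ q.1 - γ₂ q.2)
    (by fun_prop) fun q => sub_ne_zero.2 (hne _ _)
  have side₁ (t : ℝ) (ht : ‖γ₂ t‖ = 1) := im_sub_im_eq_chordAngle_sub
    (L := fun s => L (s, t)) (by fun_prop) γ₁.continuous ht n₁ (hne · t) (c := -1)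
    (fun s => by rw [hexp]; ring) 0 1
  have side₂ (s : ℝ) (hs : ‖γ₁ s‖ = 1) := im_sub_im_eq_chordAngle_sub
    (L := fun t => L (s, t)) (by fun_prop) γ₂.continuous hs n₂ (fun t => (hne s t).symm) (c := 1)
    (fun t => by rw [hexp, one_mul]) 0 1
  have x₀ : γ₁ 0 = x := g₁.extend_zero
  have x₁ : γ₁ 1 = x' := g₁.extend_one
  have y₀ : γ₂ 0 = y := g₂.extend_zero
  have y₁ : γ₂ 1 = y' := g₂.extend_one
  have bottom := side₁ 0 (y₀ ▸ hy)
  have top := side₁ 1 (y₁ ▸ hy')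
  have left := side₂ 0 (x₀ ▸ hx)
  have right := side₂ 1 (x₁ ▸ hx')
  rw [x₀, x₁, y₀] at bottom
  rw [x₀, x₁, y₁] at top
  rw [y₀, y₁, x₀, chordAngle_comm hx hy, chordAngle_comm hx hy'] at left
  rw [y₀, y₁, x₁, chordAngle_comm hx' hy, chordAngle_comm hx' hy'] at right
  linarith

lemma not_disjoint_of_joinedIn_unitDisc {K₁ K₂ : Set ℂ} (h₁ : K₁ ⊆ closedBall 0 1)
    (h₂ : K₂ ⊆ closedBall 0 1) {a b a' b' : ℝ} (hab : a < b) (hba' : b < a') (hab' : a' < b')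
    (hb'a : b' < a + 2 * π) (j₁ : JoinedIn K₁ (exp (a * I)) (exp (a' * I)))
    (j₂ : JoinedIn K₂ (exp (b * I)) (exp (b' * I))) : ¬Disjoint K₁ K₂ := by
  intro hdisj
  have unit (θ : ℝ) : ‖exp (θ * I)‖ = 1 := norm_exp_ofReal_mul_I θ
  have key := chordAngle_sub_eq_of_disjoint h₁ h₂ hdisj (unit a) (unit a') (unit b) (unit b') j₁ j₂
  rw [chordAngle_comm (unit b) (unit a), chordAngle_comm (unit b') (unit a'),
    chordAngle_comm (unit b') (unit a), chordAngle_exp_mul_I hba' (by linarith),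
    chordAngle_exp_mul_I hab (by linarith), chordAngle_exp_mul_I hab' (by linarith),
    chordAngle_exp_mul_I (by linarith) hb'a] at key
  linarith [Real.pi_pos]

lemma not_disjoint_of_joinedIn_closedBall {K₁ K₂ : Set ℂ} {c : ℂ} {r : ℝ} (hr : 0 < r)
    (h₁ : K₁ ⊆ closedBall c r) (h₂ : K₂ ⊆ closedBall c r) {a b a' b' : ℝ} (hab : a < b)
    (hba' : b < a') (hab' : a' < b') (hb'a : b' < a + 2 * π)
    (j₁ : JoinedIn K₁ (circleMap c r a) (circleMap c r a'))
    (j₂ : JoinedIn K₂ (circleMap c r b) (circleMap c r b')) : ¬Disjoint K₁ K₂ := by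
  have hr₀ : (r : ℂ) ≠ 0 := ofReal_ne_zero.2 hr.ne'
  let φ : ℂ → ℂ := fun z => (z - c) / r
  have hφ : Continuous φ := by fun_prop
  have hφinj : Function.Injective φ := fun z w h => sub_left_injective ((div_left_inj' hr₀).1 h)
  have hφball {K : Set ℂ} (hK : K ⊆ closedBall c r) : φ '' K ⊆ closedBall 0 1 := by
    rintro _ ⟨z, hz, rfl⟩
    simpa [φ, abs_of_pos hr, div_le_one hr, dist_eq] using hK hz
  have hφcircle (θ : ℝ) : φ (circleMap c r θ) = exp (θ * I) := by
    simp [φ, circleMap_zero, hr₀]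
  have j₁' := j₁.map hφ
  have j₂' := j₂.map hφ
  simp only [hφcircle] at j₁' j₂'
  rw [← disjoint_image_iff hφinj]
  exact not_disjoint_of_joinedIn_unitDisc (hφball h₁) (hφball h₂) hab hba' hab' hb'a j₁' j₂'

end Crossing

section ThreeArcs

/-- Inside the closed disc of centre `c` and radius `r`, the set `A` joins to one another points
on the three arcs of the boundary circle delimited by the angles `-π < u < v ≤ π`. Disjoint sets
cannot do this for the same parameters, and countably many parameters suffice for all tripods. -/
def JoinsThreeArcs (A : Set ℂ) (c : ℂ) (r u v : ℝ) : Prop :=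
  ∃ α ∈ Ioo (-π) u, ∃ β ∈ Ioo u v, ∃ γ ∈ Ioc v π,
    JoinedIn (A ∩ closedBall c r) (circleMap c r α) (circleMap c r β) ∧
      JoinedIn (A ∩ closedBall c r) (circleMap c r β) (circleMap c r γ)

lemma JoinsThreeArcs.not_disjoint {A B : Set ℂ} {c : ℂ} {r u v : ℝ} (hr : 0 < r)
    (hA : JoinsThreeArcs A c r u v) (hB : JoinsThreeArcs B c r u v) : ¬Disjoint A B := by
  obtain ⟨α, hα, β, hβ, γ, hγ, hαβ, hβγ⟩ := hA
  obtain ⟨α', hα', β', hβ', γ', hγ', hαβ', hβγ'⟩ := hB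
  wlog hle : α ≤ α' generalizing A B α α' β β' γ γ'
  · rw [disjoint_comm]
    exact this α' hα' β' hβ' γ' hγ' hαβ' hβγ' α hα β hβ γ hγ hαβ hβγ (le_of_not_ge hle)
  rcases hle.eq_or_lt with rfl | hlt
  · exact not_disjoint_iff.2 ⟨_, hαβ.source_mem.1, hαβ'.source_mem.1⟩
  · intro hdisj
    exact not_disjoint_of_joinedIn_closedBall hr inter_subset_right inter_subset_right hlt
      (hα'.2.trans hβ.1) (hβ.2.trans hγ'.1) (by linarith [hα.1, hγ'.2]) hαβ
      (hαβ'.trans hβγ') (hdisj.mono inter_subset_left inter_subset_left)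

lemma circleMap_arg_sub {c z : ℂ} {r : ℝ} (hz : z ∈ sphere c r) :
    circleMap c r (arg (z - c)) = z := by
  rw [mem_sphere_iff_norm] at hz
  rw [circleMap, ← hz, norm_mul_exp_arg_mul_I, add_sub_cancel]

lemma exists_joinsThreeArcs_of_joinedIn_sphere {A : Set ℂ} {p c : ℂ} {r : ℝ} {z : Fin 3 → ℂ}
    (hinj : Function.Injective z) (hz : ∀ i, z i ∈ sphere c r)
    (hjoin : ∀ i, JoinedIn (A ∩ closedBall c r) p (z i)) :
    ∃ u v : ℚ, JoinsThreeArcs A c r u v := by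
  let θ : Fin 3 → ℝ := fun i => arg (z i - c)
  have hθ (i : Fin 3) : circleMap c r (θ i) = z i := circleMap_arg_sub (hz i)
  have hθinj : Function.Injective θ := fun i j h => hinj (by rw [← hθ i, h, hθ j])
  let σ := Tuple.sort θ
  have hmono : StrictMono (θ ∘ σ) :=
    (Tuple.monotone_sort θ).strictMono_of_injective (hθinj.comp σ.injective)
  have hjoin' (i j : Fin 3) :
      JoinedIn (A ∩ closedBall c r) (circleMap c r (θ i)) (circleMap c r (θ j)) := by
    simpa only [hθ] using (hjoin i).symm.trans (hjoin j)
  obtain ⟨u, hu₀, hu₁⟩ := exists_rat_btwn (hmono (show (0 : Fin 3) < 1 by decide))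
  obtain ⟨v, hv₁, hv₂⟩ := exists_rat_btwn (hmono (show (1 : Fin 3) < 2 by decide))
  exact ⟨u, v, _, ⟨neg_pi_lt_arg _, hu₀⟩, _, ⟨hu₁, hv₁⟩, _, ⟨hv₂, arg_le_pi _⟩,
    hjoin' _ _, hjoin' _ _⟩

end ThreeArcs

section Tripod

/-- A subset of a topological space contains a tripod if it contains three legs that pairwise meet
at most in a common point `p`, each of which joins `p` to some other point by a path. This
weakening of the notion of a triod allows legs that are not arcs. -/
def ContainsTripod {X : Type*} [TopologicalSpace X] (A : Set X) : Prop :=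
  ∃ (p : X) (q : Fin 3 → X) (B : Fin 3 → Set X),
    (∀ i, q i ≠ p ∧ JoinedIn (B i) p (q i) ∧ B i ⊆ A) ∧
      Pairwise fun i j => B i ∩ B j ⊆ {p}

lemma ContainsTripod.image {X Y : Type*} [TopologicalSpace X] [TopologicalSpace Y] {A : Set X}
    (hA : ContainsTripod A) {f : X → Y} (hf : Continuous f) (hinj : Function.Injective f) :
    ContainsTripod (f '' A) := by
  obtain ⟨p, q, B, hB, hmeet⟩ := hA
  refine ⟨f p, f ∘ q, fun i => f '' B i, fun i => ?_, fun i j hij => ?_⟩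
  · obtain ⟨hq, hjoin, hsub⟩ := hB i
    exact ⟨hinj.ne hq, hjoin.map hf, image_mono hsub⟩
  · simpa only [← image_inter hinj, ← image_singleton] using image_mono (f := f) (hmeet hij)

lemma IsTriod.containsTripod {T : Set (ℝ × ℝ)} (hT : IsTriod T) : ContainsTripod T := by
  obtain ⟨p, f, hf, hmeet, rfl⟩ := hT
  refine ⟨p, fun i => f i 1, fun i => f i '' Icc 0 1, fun i => ⟨?_, ?_, ?_⟩, fun i j hij => ?_⟩
  · obtain ⟨-, hinj, rfl⟩ := hf i
    exact hinj.ne (right_mem_Icc.2 zero_le_one) (left_mem_Icc.2 zero_le_one) one_ne_zero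
  · exact JoinedIn.ofLine (hf i).1 (hf i).2.2 rfl subset_rfl
  · exact subset_iUnion (fun i => f i '' Icc (0 : ℝ) 1) i
  · exact (hmeet i j hij).subset

lemma exists_joinedIn_frontier {X : Type*} [TopologicalSpace X] {B U : Set X} {p q : X}
    (h : JoinedIn B p q) (hU : IsOpen U) (hp : p ∈ U) (hq : q ∉ U) :
    ∃ z ∈ frontier U, JoinedIn (B ∩ closure U) p z := by
  obtain ⟨γ, hγ⟩ := h
  have hexit : IsCompact (γ ⁻¹' Uᶜ) := (hU.isClosed_compl.preimage γ.continuous).isCompact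
  obtain ⟨t, ht, hleast⟩ := hexit.exists_isLeast ⟨1, by simpa using hq⟩
  have hbefore : MapsTo γ (Iio t) U := fun s hs => by_contra fun hsU => (hleast hsU).not_gt hs
  have ht₀ : 0 < t := unitInterval.pos_iff_ne_zero.2 fun h => ht (by simpa [h] using hp)
  have hupto : MapsTo γ (Iic t) (closure U) :=
    closure_Iio' (a := t) ⟨0, ht₀⟩ ▸ hbefore.closure γ.continuous
  refine ⟨γ t, hU.frontier_eq ▸ ⟨hupto self_mem_Iic, ht⟩,
    (γ.subpath 0 t).cast γ.source.symm rfl, fun s => ?_⟩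
  obtain ⟨s', hs', hs⟩ : γ.subpath 0 t s ∈ γ '' Icc 0 t :=
    γ.range_subpath_of_le 0 t ht₀.le ▸ mem_range_self s
  exact hs ▸ ⟨hγ s', hupto hs'.2⟩

lemma exists_denseSeq_ball_subset {X : Type*} [PseudoMetricSpace X]
    [TopologicalSpace.SeparableSpace X] [Nonempty X] {p : X} {V : Set X} (hV : V ∈ 𝓝 p) :
    ∃ (n : ℕ) (r : ℚ), p ∈ ball (TopologicalSpace.denseSeq X n) r ∧
      ball (TopologicalSpace.denseSeq X n) r ⊆ V := by
  obtain ⟨ε, hε, hball⟩ := Metric.mem_nhds_iff.1 hV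
  obtain ⟨r, hr₀, hr⟩ := exists_rat_btwn (half_pos hε)
  obtain ⟨n, hn⟩ := (TopologicalSpace.denseRange_denseSeq X).exists_dist_lt p hr₀
  refine ⟨n, r, hn, (ball_subset_ball' ?_).trans hball⟩
  rw [dist_comm]
  linarith

lemma ContainsTripod.exists_joinsThreeArcs {A : Set ℂ} (hA : ContainsTripod A) :
    ∃ (n : ℕ) (r u v : ℚ), 0 < r ∧ JoinsThreeArcs A (TopologicalSpace.denseSeq ℂ n) r u v := by
  obtain ⟨p, q, B, hB, hmeet⟩ := hA
  have hV : (range q)ᶜ ∈ 𝓝 p :=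
    (finite_range q).isClosed.isOpen_compl.mem_nhds (by rintro ⟨i, hi⟩; exact (hB i).1 hi)
  obtain ⟨n, r, hp, hball⟩ := exists_denseSeq_ball_subset hV
  set c := TopologicalSpace.denseSeq ℂ n
  have hexit (i : Fin 3) := exists_joinedIn_frontier (hB i).2.1 isOpen_ball hp
    fun hi => hball hi (mem_range_self i)
  choose z hz hjoin using hexit
  have hinj : Function.Injective z := by
    intro i j hij
    by_contra hne
    have hzp : z i = p :=
      hmeet hne ⟨(hjoin i).target_mem.1, hij ▸ (hjoin j).target_mem.1⟩
    exact (disjoint_frontier_iff_isOpen.2 isOpen_ball).notMem_of_mem_left (hz i) (hzp ▸ hp)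
  obtain ⟨u, v, h⟩ := exists_joinsThreeArcs_of_joinedIn_sphere (A := A) hinj
    (fun i => frontier_ball_subset_sphere (hz i))
    fun i => (hjoin i).mono (inter_subset_inter (hB i).2.2 closure_ball_subset_closedBall)
  exact ⟨n, r, u, v, by exact_mod_cast pos_of_mem_ball hp, h⟩

end Tripod

theorem moore_no_uncountable_disjoint_triods_general {X : Type*} [TopologicalSpace X] {e : X → ℂ}
    (he : Continuous e) (hinj : Function.Injective e) {S : Set (Set X)}
    (htripod : ∀ T ∈ S, ContainsTripod T) (hdisj : S.Pairwise Disjoint) : S.Countable := by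
  choose! n r u v hr hcode using fun T (hT : T ∈ S) =>
    ((htripod T hT).image he hinj).exists_joinsThreeArcs
  refine countable_of_injective_of_countable_image (f := fun T => (n T, r T, u T, v T)) ?_
    (to_countable _)
  intro T hT T' hT' heq
  obtain ⟨hn, hr', hu, hv⟩ : n T = n T' ∧ r T = r T' ∧ u T = u T' ∧ v T = v T' := by
    simpa only [Prod.mk.injEq] using heq
  have hT'code := hcode T' hT'
  rw [← hn, ← hr', ← hu, ← hv] at hT'code
  by_contra hne
  exact (hcode T hT).not_disjoint (Rat.cast_pos.2 (hr T hT)) hT'code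
    ((disjoint_image_iff hinj).2 (hdisj hT hT' hne))

/-- Moore's theorem: there is no uncountable collection of pairwise disjoint
triods in the plane. -/
theorem moore_no_uncountable_disjoint_triods (S : Set (Set (ℝ × ℝ)))
    (htriod : ∀ T ∈ S, IsTriod T)
    (hdisj : S.Pairwise Disjoint) :
    S.Countable :=
  moore_no_uncountable_disjoint_triods_general equivRealProdCLM.symm.continuous
    equivRealProdCLM.symm.injective (fun T hT => (htriod T hT).containsTripod) hdisj
end

section
/- Let X be a topological space homeomorphic to the 2-sphere S² and let K ⊆ X be a compact set separating two points a, b ∈ X \ K (i.e. a and b lie in different components of X \ K). Then there exists a connected component of K that separates a and b. -/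
/-!
Suppose no component of `K` separates `a` from `b`. A component of the compact set `K` is the
intersection of the clopen subsets of `K` containing it, so each point of `K` has a neighbourhood
clopen in `K` that does not separate `a` from `b`. Finitely many of these cover `K`, and
Janiszewski's theorem (two disjoint closed sets that do not separate `a` from `b` have a union that
does not separate them either) glues them together.

Janiszewski's theorem holds because every map from the sphere to the circle has a continuous angle.
If the component `W` of `a` off `A ∪ B` missed `b`, take `l` with `l = 1` on `A` and `l = 0` on `B`,
and the circle map equal to `exp (2π i l)` on `W` and to `1` elsewhere. A component off `A` joining
`a` to `b` forces its angle to change by `2π l(a)` between `b` and `a`, while one off `B` forces the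
change to be `2π (l(a) - 1)`.
-/

open Set Topology

section ConnectedComponentIn

variable {X : Type*} [TopologicalSpace X] {F : Set X} {a b : X}

lemma closure_connectedComponentIn_inter_subset (F : Set X) (a : X) :
    closure (connectedComponentIn F a) ∩ F ⊆ connectedComponentIn F a := by
  by_cases ha : a ∈ F
  · have hconn : IsPreconnected (closure (connectedComponentIn F a) ∩ F) :=
      isPreconnected_connectedComponentIn.subset_closure
        (subset_inter subset_closure (connectedComponentIn_subset F a)) inter_subset_left
    exact hconn.subset_connectedComponentIn
      ⟨subset_closure (mem_connectedComponentIn ha), ha⟩ inter_subset_right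
  · simp [connectedComponentIn_eq_empty ha]

lemma mem_connectedComponentIn_of_eq (hb : b ∈ F)
    (h : connectedComponentIn F a = connectedComponentIn F b) : b ∈ connectedComponentIn F a :=
  h ▸ mem_connectedComponentIn hb

variable [LocallyConnectedSpace X]

lemma frontier_connectedComponentIn_subset (hF : IsOpen F) (a : X) :
    frontier (connectedComponentIn F a) ⊆ Fᶜ := fun _ hx hxF =>
  (hF.connectedComponentIn.frontier_eq ▸ hx).2
    (closure_connectedComponentIn_inter_subset F a ⟨frontier_subset_closure hx, hxF⟩)

lemma connectedComponentIn_iUnion_of_directed {ι : Type*} {U : ι → Set X}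
    (hU : ∀ i, IsOpen (U i)) (hdir : Directed (· ⊆ ·) U) (a : X) :
    connectedComponentIn (⋃ i, U i) a = ⋃ i, connectedComponentIn (U i) a := by
  refine Subset.antisymm ?_
    (iUnion_subset fun i => connectedComponentIn_mono a (subset_iUnion U i))
  by_cases ha : a ∈ ⋃ i, U i
  swap
  · simp [connectedComponentIn_eq_empty ha]
  obtain ⟨i₀, hi₀⟩ := mem_iUnion.1 ha
  refine isPreconnected_connectedComponentIn.subset_of_closure_inter_subset
    (isOpen_iUnion fun i => (hU i).connectedComponentIn)
    ⟨a, mem_connectedComponentIn ha, mem_iUnion.2 ⟨i₀, mem_connectedComponentIn hi₀⟩⟩ ?_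
  rintro y ⟨hy, hyU⟩
  obtain ⟨j, hj⟩ := mem_iUnion.1 (connectedComponentIn_subset _ _ hyU)
  obtain ⟨z, hzy, hza⟩ := mem_closure_iff.1 hy _ (hU j).connectedComponentIn
    (mem_connectedComponentIn hj)
  obtain ⟨i, hi⟩ := mem_iUnion.1 hza
  obtain ⟨k, hik, hjk⟩ := hdir i j
  have hya : connectedComponentIn (U k) a = connectedComponentIn (U k) y :=
    (connectedComponentIn_eq (connectedComponentIn_mono a hik hi)).trans
      (connectedComponentIn_eq (connectedComponentIn_mono y hjk hzy)).symm
  exact mem_iUnion.2 ⟨k, mem_connectedComponentIn_of_eq (hjk hj) hya⟩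

end ConnectedComponentIn

section Angle

variable {X Y : Type*} [TopologicalSpace X] [TopologicalSpace Y]

/-- The circle-valued map `f` has a continuous real angle on `s`, that is, its restriction to `s`
lifts through the covering `Circle.exp : ℝ → Circle`. The angle is a total function, with arbitrary
values off `s`. -/
def HasAngleOn (f : X → Circle) (s : Set X) : Prop :=
  ∃ θ : X → ℝ, ContinuousOn θ s ∧ ∀ x ∈ s, Circle.exp (θ x) = f x

lemma sub_eq_sub_of_circleExp_eq {s : Set X} (hs : IsPreconnected s) {θ φ : X → ℝ}
    (hθ : ContinuousOn θ s) (hφ : ContinuousOn φ s)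
    (h : ∀ x ∈ s, Circle.exp (θ x) = Circle.exp (φ x)) {a b : X} (ha : a ∈ s) (hb : b ∈ s) :
    θ a - φ a = θ b - φ b := by
  have hone : ∀ x ∈ s, Circle.exp (θ x - φ x) = 1 := fun x hx => by
    rw [Circle.exp_sub, h x hx, div_self']
  exact Circle.isCoveringMap_exp.constOn_of_comp hs (hθ.sub hφ)
    (fun x hx y hy => (hone x hx).trans (hone y hy).symm) ha hb

namespace HasAngleOn

lemma comp {f : Y → Circle} {t : Set Y} (hf : HasAngleOn f t) {g : X → Y} {s : Set X}
    (hg : ContinuousOn g s) (hst : MapsTo g s t) : HasAngleOn (f ∘ g) s := by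
  obtain ⟨θ, hθ, hexp⟩ := hf
  exact ⟨θ ∘ g, hθ.comp hg hst, fun x hx => hexp (g x) (hst hx)⟩

lemma of_isSimplyConnected [LocallyPathConnectedSpace X] {f : X → Circle} {U : Set X}
    (hU : IsOpen U) (hUc : IsSimplyConnected U) (hf : ContinuousOn f U) : HasAngleOn f U := by
  obtain ⟨g, hg, hexp⟩ := Complex.exists_continuousOn_eqOn_exp_comp hUc hU
    (g := fun x => (f x : ℂ)) (by fun_prop) (by simp)
  have hexp' : ∀ x ∈ U, Complex.exp (g x) = f x := hexp
  refine ⟨fun x => (g x).im, Complex.continuous_im.comp_continuousOn hg, fun x hx => ?_⟩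
  have hre : (g x).re = 0 := by
    rw [← Real.exp_eq_one_iff, ← Complex.norm_exp, hexp' x hx, Circle.norm_coe]
  ext
  rw [Circle.coe_exp, ← hexp' x hx, ← Complex.re_add_im (g x), hre]
  simp

lemma union {f : X → Circle} {U V : Set X} (hU : IsOpen U) (hV : IsOpen V)
    (hUV : IsPreconnected (U ∩ V)) (hfU : HasAngleOn f U) (hfV : HasAngleOn f V) :
    HasAngleOn f (U ∪ V) := by
  classical
  obtain ⟨θ, hθ, hθf⟩ := hfU
  obtain ⟨φ, hφ, hφf⟩ := hfV
  obtain ⟨c, hc, hθφ⟩ : ∃ c, Circle.exp c = 1 ∧ ∀ x ∈ U ∩ V, θ x = φ x + c := by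
    have hexp : ∀ x ∈ U ∩ V, Circle.exp (θ x) = Circle.exp (φ x) := fun x hx =>
      (hθf x hx.1).trans (hφf x hx.2).symm
    rcases (U ∩ V).eq_empty_or_nonempty with hempty | ⟨y, hy⟩
    · exact ⟨0, Circle.exp_zero, by simp [hempty]⟩
    · refine ⟨θ y - φ y, by rw [Circle.exp_sub, hexp y hy, div_self'], fun x hx => ?_⟩
      have hconst : θ x - φ x = θ y - φ y := sub_eq_sub_of_circleExp_eq hUV
        (hθ.mono inter_subset_left) (hφ.mono inter_subset_right) hexp hx hy
      linarith
  let ψ : X → ℝ := U.piecewise θ fun x => φ x + c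
  have hψU : EqOn ψ θ U := piecewise_eqOn U _ _
  have hψV : EqOn ψ (fun x => φ x + c) V := fun x hxV => by
    by_cases hxU : x ∈ U
    · exact (hψU hxU).trans (hθφ x ⟨hxU, hxV⟩)
    · exact piecewise_eq_of_notMem U _ _ hxU
  refine ⟨ψ, (hθ.congr hψU).union_of_isOpen ((hφ.add continuousOn_const).congr hψV) hU hV, ?_⟩
  rintro x (hx | hx)
  · rw [hψU hx, hθf x hx]
  · rw [hψV hx, Circle.exp_add, hc, mul_one, hφf x hx]

end HasAngleOn

end Angle

section Sphere

open Metric Module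

variable {E : Type*} [NormedAddCommGroup E] [InnerProductSpace ℝ E] {n : ℕ}
  [Fact (finrank ℝ E = n + 1)]

include n

lemma isSimplyConnected_sphere_compl_singleton (v : sphere (0 : E) 1) :
    IsSimplyConnected ({v}ᶜ : Set (sphere (0 : E) 1)) := by
  let c := (stereographic' n v).toHomeomorphSourceTarget
  rw [stereographic'_source, stereographic'_target] at c
  exact (c.trans (Homeomorph.Set.univ _)).toHomotopyEquiv.simplyConnectedSpace

lemma isPreconnected_sphere_compl_pair (hn : 2 ≤ n) {v w : sphere (0 : E) 1} (hvw : w ≠ v) :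
    IsPreconnected ({v}ᶜ ∩ {w}ᶜ : Set (sphere (0 : E) 1)) := by
  let c := stereographic' n v
  have hsource : c.source = {v}ᶜ := stereographic'_source v
  have htarget : c.target = univ := stereographic'_target v
  have hw : w ∈ c.source := by simpa [hsource] using hvw
  have himage : c.symm '' {c w}ᶜ = {v}ᶜ ∩ {w}ᶜ := by
    rw [c.symm_image_eq_source_inter_preimage (htarget ▸ subset_univ _), ← hsource]
    ext x
    exact and_congr_right fun hx => (c.injOn.eq_iff hx hw).not
  have hrank : 1 < Module.rank ℝ (EuclideanSpace ℝ (Fin n)) := by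
    rw [← finrank_eq_rank, finrank_euclideanSpace_fin]
    exact_mod_cast hn
  rw [← himage]
  exact (isConnected_compl_singleton_of_one_lt_rank hrank _).isPreconnected.image _
    (c.continuousOn_symm.mono (htarget ▸ subset_univ _))

lemma hasAngleOn_sphere (hn : 2 ≤ n) {f : sphere (0 : E) 1 → Circle} (hf : Continuous f) :
    HasAngleOn f univ := by
  have : LocallyPathConnectedSpace (sphere (0 : E) 1) :=
    ChartedSpace.locallyPathConnectedSpace (EuclideanSpace ℝ (Fin n)) _
  have : Nontrivial E := nontrivial_of_finrank_eq_succ (Fact.out (p := finrank ℝ E = n + 1))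
  obtain ⟨v⟩ : Nonempty (sphere (0 : E) 1) := (NormedSpace.sphere_nonempty.2 zero_le_one).to_subtype
  have hv : -v ≠ v := (ne_neg_of_mem_unit_sphere ℝ v).symm
  have hangle (w : sphere (0 : E) 1) : HasAngleOn f {w}ᶜ :=
    .of_isSimplyConnected isOpen_compl_singleton
      (isSimplyConnected_sphere_compl_singleton (n := n) w) hf.continuousOn
  have hunion : HasAngleOn f ({v}ᶜ ∪ {-v}ᶜ) :=
    (hangle v).union isOpen_compl_singleton isOpen_compl_singleton
      (isPreconnected_sphere_compl_pair hn hv) (hangle (-v))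
  rwa [← compl_inter, (disjoint_singleton.2 hv.symm).inter_eq, compl_empty] at hunion

end Sphere

section Separation

variable {X : Type*} [TopologicalSpace X] {a b : X}

lemma continuousOn_indicator_compl {W A B : Set X} (hW : frontier W ⊆ A ∪ B) {g : X → ℝ}
    (hg : Continuous g) (hgB : EqOn g 0 B) : ContinuousOn (W.indicator g) Aᶜ := by
  classical
  exact ContinuousOn.piecewise
    (fun x hx => hgB ((hW hx.2).resolve_left hx.1)) hg.continuousOn continuousOn_const

/-- Janiszewski's theorem for disjoint closed sets. -/
theorem mem_connectedComponentIn_compl_union [NormalSpace X] [LocallyConnectedSpace X]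
    (hangle : ∀ f : X → Circle, Continuous f → HasAngleOn f univ) {A B : Set X}
    (hA : IsClosed A) (hB : IsClosed B) (hAB : Disjoint A B)
    (hbA : b ∈ connectedComponentIn Aᶜ a) (hbB : b ∈ connectedComponentIn Bᶜ a) :
    b ∈ connectedComponentIn (A ∪ B)ᶜ a := by
  have haA : a ∈ Aᶜ := connectedComponentIn_nonempty_iff.1 ⟨b, hbA⟩
  have haB : a ∈ Bᶜ := connectedComponentIn_nonempty_iff.1 ⟨b, hbB⟩
  set W := connectedComponentIn (A ∪ B)ᶜ a
  have haW : a ∈ W := mem_connectedComponentIn fun h => h.elim haA haB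
  have hfr : frontier W ⊆ A ∪ B := by
    simpa only [compl_compl] using
      frontier_connectedComponentIn_subset (hA.union hB).isOpen_compl a
  by_contra hbW
  obtain ⟨l, hlB, hlA, -⟩ := exists_continuous_zero_one_of_isClosed hB hA hAB.symm
  let ψA : X → ℝ := W.indicator fun x => 2 * Real.pi * l x
  let ψB : X → ℝ := W.indicator fun x => 2 * Real.pi * l x - 2 * Real.pi
  have hψA : ContinuousOn ψA Aᶜ :=
    continuousOn_indicator_compl hfr (by fun_prop) fun x hx => by simp [hlB hx]
  have hψB : ContinuousOn ψB Bᶜ :=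
    continuousOn_indicator_compl (union_comm A B ▸ hfr) (by fun_prop) fun x hx => by simp [hlA hx]
  have hexp (x : X) : Circle.exp (ψA x) = Circle.exp (ψB x) := by
    by_cases hx : x ∈ W <;> simp [ψA, ψB, hx, Circle.exp_sub]
  have hcont : Continuous fun x => Circle.exp (ψA x) := by
    rw [← continuousOn_univ, ← compl_empty, ← hAB.inter_eq, compl_inter]
    exact (Circle.exp.continuous.comp_continuousOn hψA).union_of_isOpen
      ((Circle.exp.continuous.comp_continuousOn hψB).congr fun x _ => hexp x)
      hA.isOpen_compl hB.isOpen_compl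
  obtain ⟨θ, hθ, hθexp⟩ := hangle _ hcont
  have hjumpA : ψA a - θ a = ψA b - θ b :=
    sub_eq_sub_of_circleExp_eq isPreconnected_connectedComponentIn
      (hψA.mono (connectedComponentIn_subset _ _)) (hθ.mono (subset_univ _))
      (fun x _ => (hθexp x (mem_univ x)).symm) (mem_connectedComponentIn haA) hbA
  have hjumpB : ψB a - θ a = ψB b - θ b :=
    sub_eq_sub_of_circleExp_eq isPreconnected_connectedComponentIn
      (hψB.mono (connectedComponentIn_subset _ _)) (hθ.mono (subset_univ _))
      (fun x _ => (hexp x).symm.trans (hθexp x (mem_univ x)).symm)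
      (mem_connectedComponentIn haB) hbB
  simp only [ψA, ψB, indicator_of_mem haW, indicator_of_notMem hbW] at hjumpA hjumpB
  linarith [Real.pi_pos]

lemma connectedComponentIn_eq_iInter_isClopen [T2Space X] {K : Set X} (hK : IsCompact K) (x : K) :
    connectedComponentIn K x = ⋂ Z : {Z : Set K // IsClopen Z ∧ x ∈ Z}, Subtype.val '' Z.1 := by
  have : CompactSpace K := isCompact_iff_compactSpace.1 hK
  have : Nonempty {Z : Set K // IsClopen Z ∧ x ∈ Z} := ⟨⟨univ, isClopen_univ, mem_univ x⟩⟩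
  rw [connectedComponentIn_eq_image x.2, connectedComponent_eq_iInter_isClopen,
    Subtype.val_injective.injOn.image_iInter_eq]

lemma exists_isClopen_mem_connectedComponentIn_compl [T2Space X] [LocallyConnectedSpace X]
    {K : Set X} (hK : IsCompact K) (x : K)
    (hb : b ∈ connectedComponentIn (connectedComponentIn K x)ᶜ a) :
    ∃ Z : Set K, IsClopen Z ∧ x ∈ Z ∧ b ∈ connectedComponentIn (Subtype.val '' Z)ᶜ a := by
  have hclosed := hK.isClosed.isClosedMap_subtype_val
  have hdir : Directed (· ⊆ ·) fun Z : {Z : Set K // IsClopen Z ∧ x ∈ Z} =>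
      (Subtype.val '' Z.1 : Set X)ᶜ := fun Z Z' =>
    ⟨⟨Z.1 ∩ Z'.1, Z.2.1.inter Z'.2.1, Z.2.2, Z'.2.2⟩,
      compl_subset_compl.2 (image_mono inter_subset_left),
      compl_subset_compl.2 (image_mono inter_subset_right)⟩
  rw [connectedComponentIn_eq_iInter_isClopen hK, compl_iInter,
    connectedComponentIn_iUnion_of_directed
      (fun Z => (hclosed _ Z.2.1.isClosed).isOpen_compl) hdir] at hb
  obtain ⟨Z, hZ⟩ := mem_iUnion.1 hb
  exact ⟨Z, Z.2.1, Z.2.2, hZ⟩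

theorem mem_connectedComponentIn_compl_of_forall [T4Space X] [LocallyConnectedSpace X]
    [PreconnectedSpace X] (hangle : ∀ f : X → Circle, Continuous f → HasAngleOn f univ)
    {K : Set X} (hK : IsCompact K)
    (hb : ∀ x ∈ K, b ∈ connectedComponentIn (connectedComponentIn K x)ᶜ a) :
    b ∈ connectedComponentIn Kᶜ a := by
  have : CompactSpace K := isCompact_iff_compactSpace.1 hK
  have hclosed := hK.isClosed.isClosedMap_subtype_val
  obtain ⟨Z, -, hZ, hbZ⟩ : ∃ Z : Set K, IsClopen Z ∧ univ ⊆ Z ∧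
      b ∈ connectedComponentIn (Subtype.val '' Z)ᶜ a := by
    refine isCompact_univ.induction_on ⟨∅, isClopen_empty, Subset.rfl, ?_⟩ ?_ ?_ fun x _ => ?_
    · simp [connectedComponentIn_univ]
    · rintro s t hst ⟨Z, hZ, htZ, hbZ⟩
      exact ⟨Z, hZ, hst.trans htZ, hbZ⟩
    · rintro s t ⟨Z, hZ, hsZ, hbZ⟩ ⟨Z', hZ', htZ', hbZ'⟩
      refine ⟨Z ∪ Z', hZ.union hZ', union_subset_union hsZ htZ', ?_⟩
      rw [← union_sdiff_self, image_union]
      exact mem_connectedComponentIn_compl_union hangle (hclosed _ hZ.isClosed)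
        (hclosed _ (hZ'.diff hZ).isClosed)
        ((disjoint_image_iff Subtype.val_injective).2 disjoint_sdiff_right) hbZ
        (connectedComponentIn_mono a (compl_subset_compl.2 (image_mono sdiff_subset)) hbZ')
    · obtain ⟨Z, hZ, hxZ, hbZ⟩ := exists_isClopen_mem_connectedComponentIn_compl hK x (hb x x.2)
      exact ⟨Z, mem_nhdsWithin_of_mem_nhds (hZ.isOpen.mem_nhds hxZ), Z, hZ, Subset.rfl, hbZ⟩
  rwa [univ_subset_iff.1 hZ, image_univ, Subtype.range_val] at hbZ

theorem component_separates_sphere_general [T4Space X] [LocallyConnectedSpace X]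
    [PreconnectedSpace X] (hangle : ∀ f : X → Circle, Continuous f → HasAngleOn f univ)
    {K : Set X} (hK : IsCompact K) (hb : b ∉ K)
    (hsep : connectedComponentIn Kᶜ a ≠ connectedComponentIn Kᶜ b) :
    ∃ x ∈ K, connectedComponentIn (connectedComponentIn K x)ᶜ a ≠
      connectedComponentIn (connectedComponentIn K x)ᶜ b := by
  by_contra! h
  refine hsep (connectedComponentIn_eq
    (mem_connectedComponentIn_compl_of_forall hangle hK fun x hx => ?_))
  exact mem_connectedComponentIn_of_eq (fun hbx => hb (connectedComponentIn_subset K x hbx))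
    (h x hx)

end Separation

/-- If a compact set `K` separates two points in a topological 2-sphere, then
some connected component of `K` already separates them. -/
theorem component_separates_sphere {X : Type*} [TopologicalSpace X]
    (e : X ≃ₜ Metric.sphere (0 : EuclideanSpace ℝ (Fin 3)) 1)
    (K : Set X) (hK : IsCompact K) (a b : X) (ha : a ∉ K) (hb : b ∉ K)
    (hsep : connectedComponentIn Kᶜ a ≠ connectedComponentIn Kᶜ b) :
    ∃ x ∈ K, connectedComponentIn (connectedComponentIn K x)ᶜ a ≠
      connectedComponentIn (connectedComponentIn K x)ᶜ b := by
  have : Fact (Module.finrank ℝ (EuclideanSpace ℝ (Fin 3)) = 2 + 1) := ⟨finrank_euclideanSpace_fin⟩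
  have hrank : 1 < Module.rank ℝ (EuclideanSpace ℝ (Fin 3)) := by
    rw [← Module.finrank_eq_rank, finrank_euclideanSpace_fin]
    norm_num
  have := isPreconnected_iff_preconnectedSpace.1
    (isConnected_sphere hrank 0 zero_le_one).isPreconnected
  have := ChartedSpace.locallyConnectedSpace (EuclideanSpace ℝ (Fin 2))
    (Metric.sphere (0 : EuclideanSpace ℝ (Fin 3)) 1)
  have : T4Space X := e.symm.t4Space
  have : LocallyConnectedSpace X := e.locallyConnectedSpace
  have : PreconnectedSpace X := e.symm.surjective.denseRange.preconnectedSpace e.symm.continuous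
  refine component_separates_sphere_general (fun f hf => ?_) hK hb hsep
  have hangle : HasAngleOn ((f ∘ e.symm) ∘ e) univ :=
    (hasAngleOn_sphere le_rfl (hf.comp e.symm.continuous)).comp e.continuous.continuousOn
      (mapsTo_univ e univ)
  simpa only [Function.comp_assoc, e.symm_comp_self, Function.comp_id] using hangle
end
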